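/- For every β ∈ ℤ₊ⁿ and every flag Φ (weakly increasing with Φ_n = n), either the set 𝒲(β, Φ) is empty, or there exist β̂ ∈ ℤ₊ⁿ with the same decreasing rearrangement as β (β† = β̂†) and a bijection ζ : 𝒲(β, Φ) → 𝒲(β̂, Φ₀), where Φ₀ = (1, 2, …, n) is the standard flag, such that every word u ∈ 𝒲(β, Φ) is Knuth equivalent to ζ(u). -/

import Mathlib

/-!
Common combinatorial framework for flagged refined stable Grothendieck polynomials
of skew shapes: skew shapes, semistandard set-valued tableaux, the signature-rule
crystal operators, reading words, Knuth equivalence, the Burge correspondence and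
the Chan–Pflueger skew set-valued row insertion (as interfaces), Demazure crystals
and key polynomials.
-/

open Classical

attribute [local instance 2000] Classical.propDecidable

noncomputable section

namespace SkewG

/-! ### Cells and shapes -/

/-- A cell `(i, j)`: row `i`, column `j` (both 0-indexed). -/
abbrev Cell : Type := ℕ × ℕ

/-- A finite set of cells is the Young diagram of a partition iff it is a lower set. -/
def IsPartitionShape (s : Finset Cell) : Prop :=
  ∀ i j i' j', (i, j) ∈ s → i' ≤ i → j' ≤ j → (i', j') ∈ s

/-- The shape has at most `n` parts (rows `0, …, n-1`). -/
def AtMostRows (s : Finset Cell) (n : ℕ) : Prop := ∀ c ∈ s, c.1 < n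

/-- Two cells share a side. -/
def Adj (c d : Cell) : Prop :=
  (c.1 = d.1 ∧ (c.2 = d.2 + 1 ∨ d.2 = c.2 + 1)) ∨
  (c.2 = d.2 ∧ (c.1 = d.1 + 1 ∨ d.1 = c.1 + 1))

/-- Any two boxes of `s` are linked by a path inside `s`. -/
def ConnectedShape (s : Finset Cell) : Prop :=
  ∀ c ∈ s, ∀ d ∈ s,
    Relation.ReflTransGen (fun a b => a ∈ s ∧ b ∈ s ∧ Adj a b) c d

/-- `s` is a skew shape `λ/μ`. -/
def IsSkewShape (s : Finset Cell) : Prop :=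
  ∃ lam mu : Finset Cell, IsPartitionShape lam ∧ IsPartitionShape mu ∧
    mu ⊆ lam ∧ s = lam \ mu

/-! ### Tableaux -/

/-- A semistandard set-valued tableau on the cell set `s`, with entries in `{1, …, n}`:
nonempty sets on `s`, empty outside, rows weakly increasing, columns strictly increasing. -/
def IsSVTOn (n : ℕ) (s : Finset Cell) (T : Cell → Finset ℕ) : Prop :=
  (∀ c ∈ s, (T c).Nonempty) ∧
  (∀ c, c ∉ s → T c = ∅) ∧
  (∀ c, ∀ x ∈ T c, 1 ≤ x ∧ x ≤ n) ∧
  (∀ i j, (i, j) ∈ s → (i, j + 1) ∈ s →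
    ∀ x ∈ T (i, j), ∀ y ∈ T (i, j + 1), x ≤ y) ∧
  (∀ i j, (i, j) ∈ s → (i + 1, j) ∈ s →
    ∀ x ∈ T (i, j), ∀ y ∈ T (i + 1, j), x < y)

/-- An ordinary (single-valued) semistandard Young tableau on `s`; `0` outside `s`. -/
def IsSSYTOn (s : Finset Cell) (T : Cell → ℕ) : Prop :=
  (∀ c ∈ s, 1 ≤ T c) ∧
  (∀ c, c ∉ s → T c = 0) ∧
  (∀ i j, (i, j) ∈ s → (i, j + 1) ∈ s → T (i, j) ≤ T (i, j + 1)) ∧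
  (∀ i j, (i, j) ∈ s → (i + 1, j) ∈ s → T (i, j) < T (i + 1, j))

/-- A reverse row-strict tableau: rows strictly decreasing, columns weakly decreasing. -/
def IsRevRowStrictOn (s : Finset Cell) (T : Cell → ℕ) : Prop :=
  (∀ c ∈ s, 1 ≤ T c) ∧
  (∀ c, c ∉ s → T c = 0) ∧
  (∀ i j, (i, j) ∈ s → (i, j + 1) ∈ s → T (i, j + 1) < T (i, j)) ∧
  (∀ i j, (i, j) ∈ s → (i + 1, j) ∈ s → T (i + 1, j) ≤ T (i, j))

/-- Row bounded: entries in (0-indexed) row `i` — i.e. row `i+1` — are `< i+1`. -/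
def IsRowBounded (s : Finset Cell) (T : Cell → ℕ) : Prop :=
  ∀ c ∈ s, T c ≤ c.1

/-- Row weakly bounded: entries in row `i+1` (1-indexed) are `≤ i+1`. -/
def IsRowWeaklyBounded (s : Finset Cell) (T : Cell → ℕ) : Prop :=
  ∀ c ∈ s, T c ≤ c.1 + 1

/-- Number of occurrences of the letter `v` in a set-valued tableau. -/
def wtOn (s : Finset Cell) (T : Cell → Finset ℕ) (v : ℕ) : ℕ :=
  ∑ c ∈ s, if v ∈ T c then 1 else 0

/-- Number of occurrences of the letter `v` in a single-valued tableau. -/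
def wtS (s : Finset Cell) (T : Cell → ℕ) (v : ℕ) : ℕ :=
  ∑ c ∈ s, if T c = v then 1 else 0

/-- Excess in (0-indexed) row `i`: number of entries minus number of boxes. -/
def exRow (s : Finset Cell) (T : Cell → Finset ℕ) (i : ℕ) : ℕ :=
  (∑ c ∈ s.filter (fun c => c.1 = i), (T c).card) - (s.filter (fun c => c.1 = i)).card

/-- Total excess `|ex(T)|`. -/
def exTotal (s : Finset Cell) (T : Cell → Finset ℕ) : ℕ :=
  (∑ c ∈ s, (T c).card) - s.card

/-- A flag (0-indexed): weakly increasing on rows `0, …, n-1`, positive, with `Φ (n-1) = n`. -/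
def IsFlag (n : ℕ) (Φ : ℕ → ℕ) : Prop :=
  (∀ i j, i ≤ j → j < n → Φ i ≤ Φ j) ∧ (∀ i, i < n → 1 ≤ Φ i) ∧ Φ (n - 1) = n

/-- A set-valued tableau respects the flag `Φ`: entries of row `i` are at most `Φ i`. -/
def RespectsFlag (Φ : ℕ → ℕ) (T : Cell → Finset ℕ) : Prop :=
  ∀ i j, ∀ x ∈ T (i, j), x ≤ Φ i

/-- A single-valued tableau on `s` respects the flag `Φ`. -/
def RespectsFlagS (s : Finset Cell) (Φ : ℕ → ℕ) (T : Cell → ℕ) : Prop :=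
  ∀ c ∈ s, T c ≤ Φ c.1

/-- View a single-valued tableau as a set-valued one. -/
def svtOf (T : Cell → ℕ) : Cell → Finset ℕ := fun c => if T c = 0 then ∅ else {T c}

/-! ### The signature-rule crystal operators on set-valued fillings -/

def colHas (T : Cell → Finset ℕ) (v j : ℕ) : Prop := ∃ i, v ∈ T (i, j)

/-- Column `j` gets a `+` for the letter `v`: it contains `v` but not `v+1`. -/
def IsPlusCol (T : Cell → Finset ℕ) (v j : ℕ) : Prop := colHas T v j ∧ ¬ colHas T (v + 1) j

/-- Column `j` gets a `-` for the letter `v`: it contains `v+1` but not `v`. -/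
def IsMinusCol (T : Cell → Finset ℕ) (v j : ℕ) : Prop := colHas T (v + 1) j ∧ ¬ colHas T v j

def plusCount (T : Cell → Finset ℕ) (v a b : ℕ) : ℕ :=
  ((Finset.Ico a b).filter (fun j => IsPlusCol T v j)).card

def minusCount (T : Cell → Finset ℕ) (v a b : ℕ) : ℕ :=
  ((Finset.Ico a b).filter (fun j => IsMinusCol T v j)).card

/-- The `+` above column `j` survives the successive cancellation of `(-,+)` pairs. -/
def UnmatchedPlus (T : Cell → Finset ℕ) (v j : ℕ) : Prop :=
  IsPlusCol T v j ∧ minusCount T v 0 j < plusCount T v 0 (j + 1)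

/-- The `-` above column `j` survives the successive cancellation of `(-,+)` pairs. -/
def UnmatchedMinus (T : Cell → Finset ℕ) (v j : ℕ) : Prop :=
  IsMinusCol T v j ∧ ∀ b, plusCount T v (j + 1) b ≤ minusCount T v (j + 1) b

/-- The lowering operator `f_v` on raw set-valued fillings (`none` encodes `0`). -/
def fFill (v : ℕ) (T : Cell → Finset ℕ) : Option (Cell → Finset ℕ) :=
  if h : ∃ j, UnmatchedPlus T v j then
    letI j := sSup {j | UnmatchedPlus T v j}
    if hr : ∃ i, v ∈ T (i, j) then
      letI r := Classical.choose hr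
      if v ∈ T (r, j + 1) then
        some (fun c =>
          if c = (r, j + 1) then (T c).erase v
          else if c = (r, j) then insert (v + 1) (T c)
          else T c)
      else
        some (fun c => if c = (r, j) then insert (v + 1) ((T c).erase v) else T c)
    else none
  else none

/-- The raising operator `e_v` on raw set-valued fillings (`none` encodes `0`). -/
def eFill (v : ℕ) (T : Cell → Finset ℕ) : Option (Cell → Finset ℕ) :=
  if h : ∃ j, UnmatchedMinus T v j then
    letI j := sInf {j | UnmatchedMinus T v j}
    if hr : ∃ i, (v + 1) ∈ T (i, j) then
      letI r := Classical.choose hr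
      if 1 ≤ j ∧ (v + 1) ∈ T (r, j - 1) then
        some (fun c =>
          if c = (r, j - 1) then (T c).erase (v + 1)
          else if c = (r, j) then insert v (T c)
          else T c)
      else
        some (fun c => if c = (r, j) then insert v ((T c).erase (v + 1)) else T c)
    else none
  else none

def fIter (v : ℕ) : ℕ → (Cell → Finset ℕ) → Option (Cell → Finset ℕ)
  | 0, T => some T
  | k + 1, T => (fIter v k T).bind (fFill v)

def eIter (v : ℕ) : ℕ → (Cell → Finset ℕ) → Option (Cell → Finset ℕ)
  | 0, T => some T
  | k + 1, T => (eIter v k T).bind (eFill v)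

/-- `φ_v(T) = max {k | f_v^k T ≠ 0}`. -/
def phiOp (v : ℕ) (T : Cell → Finset ℕ) : ℕ := sSup {k | (fIter v k T).isSome}

/-- `ε_v(T) = max {k | e_v^k T ≠ 0}`. -/
def epsOp (v : ℕ) (T : Cell → Finset ℕ) : ℕ := sSup {k | (eIter v k T).isSome}

/-- A highest weight element: killed by all raising operators. -/
def HighestWeight (n : ℕ) (T : Cell → Finset ℕ) : Prop :=
  ∀ v, 1 ≤ v → v + 1 ≤ n → eFill v T = none

/-- One step of the crystal graph (in either direction). -/
def CrystRel (n : ℕ) (T U : Cell → Finset ℕ) : Prop :=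
  ∃ v, 1 ≤ v ∧ v + 1 ≤ n ∧ (fFill v T = some U ∨ fFill v U = some T)

/-- The connected component of `S'` inside a subset `X` of a crystal. -/
def ComponentOf (n : ℕ) (X : Set (Cell → Finset ℕ)) (S' : Cell → Finset ℕ) :
    Set (Cell → Finset ℕ) :=
  {T | T ∈ X ∧ Relation.ReflTransGen (fun a b => a ∈ X ∧ b ∈ X ∧ CrystRel n a b) S' T}

/-! ### Words -/

/-- Columns of row `i` of `s`, listed from left to right. -/
def rowList (s : Finset Cell) (i : ℕ) : List ℕ :=
  (List.range (s.sup Prod.snd + 1)).filter (fun j => decide ((i, j) ∈ s))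

def rowLenOf (s : Finset Cell) (i : ℕ) : ℕ := (rowList s i).length

def rowWordOn (s : Finset Cell) (T : Cell → ℕ) (i : ℕ) : List ℕ :=
  (rowList s i).map (fun j => T (i, j))

/-- The row reading word: rows bottom to top, each row left to right. -/
def readingWordOn (s : Finset Cell) (T : Cell → ℕ) : List ℕ :=
  ((List.range (s.sup Prod.fst + 1)).reverse.map (rowWordOn s T)).flatten

/-- The word `b(s)`: `(row length of row i)` copies of the letter `i+1`,
rows listed from the bottom up. -/
def bwordOn (s : Finset Cell) : List ℕ :=
  ((List.range (s.sup Prod.fst + 1)).reverse.map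
    (fun i => List.replicate (rowList s i).length (i + 1))).flatten

/-- The word `b(α)` of a composition: `α i` copies of the letter `i+1`, decreasing letters. -/
def bwordComp (n : ℕ) (α : ℕ → ℕ) : List ℕ :=
  ((List.range n).reverse.map (fun i => List.replicate (α i) (i + 1))).flatten

/-- Elementary Knuth moves. -/
inductive KnuthStep : List ℕ → List ℕ → Prop
  | kxzy (u w : List ℕ) (x y z : ℕ) (h1 : x ≤ y) (h2 : y < z) :
      KnuthStep (u ++ x :: z :: y :: w) (u ++ z :: x :: y :: w)
  | kyxz (u w : List ℕ) (x y z : ℕ) (h1 : x < y) (h2 : y ≤ z) :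
      KnuthStep (u ++ y :: x :: z :: w) (u ++ y :: z :: x :: w)

/-- Knuth (plactic) equivalence of words. -/
def KnuthEquiv : List ℕ → List ℕ → Prop := Relation.EqvGen KnuthStep

/-- Yamanouchi word: in every suffix, `v+1` occurs at least as often as `v+2`. -/
def IsYamanouchi (w : List ℕ) : Prop :=
  ∀ k v, (w.drop k).count (v + 2) ≤ (w.drop k).count (v + 1)

/-- The biword conditions (columns listed left to right with weakly decreasing top row,
strictly decreasing the top whenever the bottom strictly decreases). -/
def IsBiword (top bot : List ℕ) : Prop :=
  top.length = bot.length ∧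
  (∀ x ∈ top, 1 ≤ x) ∧ (∀ x ∈ bot, 1 ≤ x) ∧
  ∀ p, p + 1 < top.length →
    top.getD (p + 1) 0 ≤ top.getD p 0 ∧
    (bot.getD (p + 1) 0 < bot.getD p 0 → top.getD (p + 1) 0 < top.getD p 0)

/-! ### Sorting, Demazure crystals -/

/-- The `i`-th largest value (0-indexed) among `α 0, …, α (n-1)`: the decreasing
rearrangement `α†`. -/
def dsort (n : ℕ) (α : ℕ → ℕ) (i : ℕ) : ℕ :=
  sSup {m | i < ((Finset.range n).filter (fun k => m ≤ α k)).card}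

/-- The Young diagram of a weakly decreasing function. -/
def diagOf (n : ℕ) (f : ℕ → ℕ) : Finset Cell :=
  (Finset.product (Finset.range n) (Finset.range (f 0))).filter (fun c => c.2 < f c.1)

/-- product of simple transpositions `s_{i} = (i, i+1)` (0-indexed coordinates). -/
def permOfWord (is : List ℕ) : Equiv.Perm ℕ :=
  (is.map (fun i => Equiv.swap i (i + 1))).prod

def IsReducedWord (τ : Equiv.Perm ℕ) (is : List ℕ) : Prop :=
  permOfWord is = τ ∧ ∀ js : List ℕ, permOfWord js = τ → is.length ≤ js.length

/-- `τ • α` with `(τ • α) (τ i) = α i`. -/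
def permuteComp (τ : Equiv.Perm ℕ) (f : ℕ → ℕ) : ℕ → ℕ := fun i => f (τ.symm i)

/-- The unique SSYT of partition shape `sh` whose weight equals its shape
(`i+1`'s in row `i`). -/
def highestTabOf (sh : Finset Cell) : Cell → ℕ := fun c => if c ∈ sh then c.1 + 1 else 0

/-- Apply `f_{i₁}^{k₁} ∘ ⋯ ∘ f_{i_p}^{k_p}` (rightmost factor first); the letters of the
first list are crystal indices. -/
def applyF : List ℕ → List ℕ → (Cell → Finset ℕ) → Option (Cell → Finset ℕ)
  | [], _, T => some T
  | _ :: _, [], T => some T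
  | i :: is, k :: ks, T => (applyF is ks T).bind (fIter i k)

/-- The Demazure crystal `B_w(sh)` (as a set of set-valued fillings all of whose
values are singletons), for a given word for `w`; the word is a list of crystal
indices `i` (acting on the letters `i, i+1`). -/
def DemazureSet (sh : Finset Cell) (word : List ℕ) : Set (Cell → Finset ℕ) :=
  {T | ∃ ks : List ℕ, ks.length = word.length ∧
        applyF word ks (svtOf (highestTabOf sh)) = some T}

/-! ### Key polynomials via Demazure operators -/

/-- `T_i` applied to a monomial `x^a` (the exact quotient
`(x_i x^a - x_{i+1} s_i x^a)/(x_i - x_{i+1})`), written as an explicit sum. -/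
def demMono (n : ℕ) (i : ℕ) (h : i + 1 < n) (a : Fin n →₀ ℕ) : MvPolynomial (Fin n) ℤ :=
  letI i0 : Fin n := ⟨i, Nat.lt_of_succ_lt h⟩
  letI i1 : Fin n := ⟨i + 1, h⟩
  letI p := a i0
  letI q := a i1
  if q ≤ p then
    ∑ m ∈ Finset.Icc q p,
      MvPolynomial.monomial ((a.update i0 m).update i1 (p + q - m)) (1 : ℤ)
  else
    - ∑ m ∈ Finset.Ico (p + 1) q,
      MvPolynomial.monomial ((a.update i0 m).update i1 (p + q - m)) (1 : ℤ)

/-- The Demazure operator `T_i` (0-indexed: acts on the variables `x_i, x_{i+1}`). -/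
def demOp (n : ℕ) (i : ℕ) (f : MvPolynomial (Fin n) ℤ) : MvPolynomial (Fin n) ℤ :=
  if h : i + 1 < n then
    ∑ a ∈ f.support, MvPolynomial.C (MvPolynomial.coeff a f) * demMono n i h a
  else f

/-- `T_w` along a word (leftmost letter applied last). -/
def demWord (n : ℕ) : List ℕ → MvPolynomial (Fin n) ℤ → MvPolynomial (Fin n) ℤ
  | [], f => f
  | i :: is, f => demOp n i (demWord n is f)

/-- The monomial `x^α` (coordinate `i` of `Fin n` carries `α i`). -/
def xMono (n : ℕ) (α : ℕ → ℕ) : MvPolynomial (Fin n) ℤ :=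
  ∏ i : Fin n, MvPolynomial.X i ^ α (i : ℕ)

/-- The key polynomial `κ_α = T_w x^{α†}` for (any) reduced word of a permutation `w`
with `w • α† = α`. -/
def keyPoly (n : ℕ) (α : ℕ → ℕ) : MvPolynomial (Fin n) ℤ :=
  if h : ∃ is : List ℕ, IsReducedWord (permOfWord is) is ∧
      (∀ i, i < n → permuteComp (permOfWord is) (dsort n α) i = α i)
  then demWord n h.choose (xMono n (dsort n α))
  else 0

/-! ### Generating polynomials -/

abbrev XPoly (n : ℕ) := MvPolynomial (Fin n) ℤ
abbrev XTPoly (n : ℕ) := MvPolynomial (Fin n) (MvPolynomial (Fin n) ℤ)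

/-- Embed an `x`-polynomial into the ring `ℤ[t][x]`. -/
def liftX (n : ℕ) (f : XPoly n) : XTPoly n :=
  MvPolynomial.map (MvPolynomial.C : ℤ →+* MvPolynomial (Fin n) ℤ) f

/-- The monomial `t^α` inside `ℤ[t][x]` (as a constant in the `x`-variables). -/
def tMono (n : ℕ) (α : ℕ → ℕ) : XTPoly n :=
  MvPolynomial.C (∏ i : Fin n, MvPolynomial.X i ^ α (i : ℕ))

/-- The monomial `x^{wt T}` for a set-valued tableau, inside `ℤ[t][x]`. -/
def xWt (n : ℕ) (s : Finset Cell) (T : Cell → Finset ℕ) : XTPoly n :=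
  ∏ i : Fin n, MvPolynomial.X i ^ wtOn s T ((i : ℕ) + 1)

/-- extend a `Fin n`-indexed composition by zero. -/
def extendf (n : ℕ) (α : Fin n → ℕ) : ℕ → ℕ :=
  fun r => if h : r < n then α ⟨r, h⟩ else 0

/-- The flagged refined skew stable Grothendieck polynomial
`G_{λ/μ}(X_Φ; t) = Σ_T (-1)^{|ex T|} t^{ex T} x^{wt T}`. -/
def Gflagged (n : ℕ) (s : Finset Cell) (Φ : ℕ → ℕ) : XTPoly n :=
  ∑ᶠ T : {T : Cell → Finset ℕ // IsSVTOn n s T ∧ RespectsFlag Φ T},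
    ((-1 : XTPoly n) ^ exTotal s T.1) * tMono n (exRow s T.1) * xWt n s T.1

/-- The flagged skew Schur polynomial `s_{λ/μ}(X_Φ)`. -/
def sFlagged (n : ℕ) (s : Finset Cell) (Φ : ℕ → ℕ) : XPoly n :=
  ∑ᶠ U : {U : Cell → ℕ // IsSSYTOn s U ∧ (∀ c ∈ s, U c ≤ n) ∧ RespectsFlagS s Φ U},
    ∏ i : Fin n, MvPolynomial.X i ^ wtS s U.1 ((i : ℕ) + 1)

/-- The Schur polynomial `s_ν(x_1, …, x_n)` of a partition shape. -/
def schurOf (n : ℕ) (sh : Finset Cell) : XPoly n :=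
  ∑ᶠ U : {U : Cell → ℕ // IsSSYTOn sh U ∧ ∀ c ∈ sh, U c ≤ n},
    ∏ i : Fin n, MvPolynomial.X i ^ wtS sh U.1 ((i : ℕ) + 1)

/-- The stable Grothendieck polynomial `G_ν(x_1,…,x_n) = RG_ν(x; 1)`. -/
def RGone (n : ℕ) (sh : Finset Cell) : XPoly n :=
  ∑ᶠ T : {T : Cell → Finset ℕ // IsSVTOn n sh T},
    ((-1 : XPoly n) ^ exTotal sh T.1) *
      ∏ i : Fin n, MvPolynomial.X i ^ wtOn sh T.1 ((i : ℕ) + 1)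

/-! ### Reverse plane partitions -/

/-- A reverse plane partition on `s` (weakly increasing rows and columns, `0` outside). -/
def IsRPPOn (s : Finset Cell) (R : Cell → ℕ) : Prop :=
  (∀ c ∈ s, 1 ≤ R c) ∧ (∀ c, c ∉ s → R c = 0) ∧
  (∀ i j, (i, j) ∈ s → (i, j + 1) ∈ s → R (i, j) ≤ R (i, j + 1)) ∧
  (∀ i j, (i, j) ∈ s → (i + 1, j) ∈ s → R (i, j) ≤ R (i + 1, j))

/-- `wt(R) v` = number of columns of `R` containing `v`. -/
def wtRPP (s : Finset Cell) (R : Cell → ℕ) (v : ℕ) : ℕ :=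
  ((Finset.range (s.sup Prod.snd + 1)).filter
    (fun j => ∃ i, (i, j) ∈ s ∧ R (i, j) = v)).card

/-- `ceq(R) i` = number of boxes of row `i` whose entry equals the entry just below. -/
def ceqOn (s : Finset Cell) (R : Cell → ℕ) (i : ℕ) : ℕ :=
  (s.filter (fun c => c.1 = i ∧ (c.1 + 1, c.2) ∈ s ∧ R c = R (c.1 + 1, c.2))).card

/-- The dual stable Grothendieck polynomial `g_ν(x_1,…,x_n)`. -/
def gDual (n : ℕ) (sh : Finset Cell) : XPoly n :=
  ∑ᶠ R : {R : Cell → ℕ // IsRPPOn sh R ∧ ∀ c ∈ sh, R c ≤ n},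
    ∏ i : Fin n, MvPolynomial.X i ^ wtRPP sh R.1 ((i : ℕ) + 1)

/-- The flagged refined dual stable Grothendieck polynomial
`g_{λ/μ}(X_Φ; t) = Σ_R t^{ceq R} x^{wt R}`. -/
def gFlagged (n : ℕ) (s : Finset Cell) (Φ : ℕ → ℕ) : XTPoly n :=
  ∑ᶠ R : {R : Cell → ℕ // IsRPPOn s R ∧ RespectsFlagS s Φ R},
    tMono n (ceqOn s R.1) * ∏ i : Fin n, MvPolynomial.X i ^ wtRPP s R.1 ((i : ℕ) + 1)

/-- A cell is circled in an RPP: topmost occurrence of its letter in its column. -/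
def rppCircled (s : Finset Cell) (R : Cell → ℕ) (c : Cell) : Prop :=
  c ∈ s ∧ (c.1 = 0 ∨ (c.1 - 1, c.2) ∉ s ∨ R (c.1 - 1, c.2) ≠ R c)

/-- The reading word `w(R)` of an RPP: circled entries, bottom row up, left to right. -/
def rppReadingWord (s : Finset Cell) (R : Cell → ℕ) : List ℕ :=
  ((List.range (s.sup Prod.fst + 1)).reverse.map (fun i =>
    ((rowList s i).filter (fun j => decide (rppCircled s R (i, j)))).map
      (fun j => R (i, j)))).flatten

/-- The row reading word `r_T` of an RPP: omit entries equal to the entry just below,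
read rows bottom to top, left to right. -/
def rppRowWord (s : Finset Cell) (R : Cell → ℕ) : List ℕ :=
  ((List.range (s.sup Prod.fst + 1)).reverse.map (fun i =>
    ((rowList s i).filter (fun j => decide ((i + 1, j) ∉ s ∨ R (i + 1, j) ≠ R (i, j)))).map
      (fun j => R (i, j)))).flatten

/-- The height word `h(T)`: the (1-indexed) row numbers of the letters of `r_T`. -/
def rppHeights (s : Finset Cell) (R : Cell → ℕ) : List ℕ :=
  ((List.range (s.sup Prod.fst + 1)).reverse.map (fun i =>
    ((rowList s i).filter (fun j => decide ((i + 1, j) ∉ s ∨ R (i + 1, j) ≠ R (i, j)))).map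
      (fun _ => i + 1))).flatten

/-- minimum entry of a box. -/
def boxMin (A : Finset ℕ) : ℕ := sInf (A : Set ℕ)

/-- non-minimal entries of a box, largest first. -/
def boxExtras (A : Finset ℕ) : List ℕ :=
  ((List.range (A.sup id + 1)).filter (fun x => decide (x ∈ A ∧ x ≠ boxMin A))).reverse

/-- The reading word `w(S)` of a set-valued tableau: rows bottom to top; in each row
first the non-minimal entries, boxes right to left (largest to smallest within a box),
then the minimal entries, boxes left to right. -/
def svtReadingWord (s : Finset Cell) (T : Cell → Finset ℕ) : List ℕ :=
  ((List.range (s.sup Prod.fst + 1)).reverse.map (fun i =>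
    (((rowList s i).reverse.map (fun j => boxExtras (T (i, j)))).flatten) ++
      ((rowList s i).map (fun j => boxMin (T (i, j)))))).flatten

/-! ### The `*`-composition of shapes and tableaux -/

def minRowOf (s : Finset Cell) : ℕ := sInf (Prod.fst '' (s : Set Cell))
def minColOf (s : Finset Cell) : ℕ := sInf (Prod.snd '' (s : Set Cell))

def rowSpan (s : Finset Cell) : ℕ := if s = ∅ then 0 else s.sup Prod.fst + 1 - minRowOf s
def colSpan (s : Finset Cell) : ℕ := if s = ∅ then 0 else s.sup Prod.snd + 1 - minColOf s

def rowOffset (shapes : List (Finset Cell)) (i : ℕ) : ℕ := ((shapes.take i).map rowSpan).sum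
def colOffset (shapes : List (Finset Cell)) (i : ℕ) : ℕ :=
  ((shapes.drop (i + 1)).map colSpan).sum

def embedCell (shapes : List (Finset Cell)) (i : ℕ) (c : Cell) : Cell :=
  (rowOffset shapes i + (c.1 - minRowOf (shapes.getD i ∅)),
   colOffset shapes i + (c.2 - minColOf (shapes.getD i ∅)))

def unembedCell (shapes : List (Finset Cell)) (i : ℕ) (c : Cell) : Cell :=
  (c.1 - rowOffset shapes i + minRowOf (shapes.getD i ∅),
   c.2 - colOffset shapes i + minColOf (shapes.getD i ∅))

/-- `θ_k * ⋯ * θ_1` (the list is ordered from the top component down). -/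
def compositeShape (shapes : List (Finset Cell)) : Finset Cell :=
  (Finset.range shapes.length).biUnion (fun i => (shapes.getD i ∅).image (embedCell shapes i))

/-- `T_k * ⋯ * T_1`. -/
def compositeTab (shapes : List (Finset Cell)) (Ts : List (Cell → ℕ)) : Cell → ℕ :=
  fun c => ∑ i ∈ Finset.range shapes.length,
    if unembedCell shapes i c ∈ shapes.getD i ∅ ∧
        embedCell shapes i (unembedCell shapes i c) = c
    then Ts.getD i (fun _ => 0) (unembedCell shapes i c) else 0

/-- `φ_1 * ⋯ * φ_k`: concatenation of flags along the row blocks of the components. -/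
def compositeFlag (shapes : List (Finset Cell)) (flags : List (ℕ → ℕ)) : ℕ → ℕ :=
  fun r => ∑ i ∈ Finset.range shapes.length,
    if rowOffset shapes i ≤ r ∧ r < rowOffset shapes i + rowSpan (shapes.getD i ∅)
    then flags.getD i (fun _ => 0) (r - rowOffset shapes i) else 0

/-- `comps` is the list of connected components of `s`, from the top down. -/
def IsComponents (s : Finset Cell) (comps : List (Finset Cell)) : Prop :=
  (∀ c, c ∈ s ↔ ∃ i < comps.length, c ∈ comps.getD i ∅) ∧
  (∀ i, i < comps.length → (comps.getD i ∅).Nonempty) ∧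
  (∀ i, i < comps.length → ConnectedShape (comps.getD i ∅)) ∧
  (∀ i j, i < j → j < comps.length →
    ∀ c ∈ comps.getD i ∅, ∀ d ∈ comps.getD j ∅, c.1 < d.1) ∧
  (∀ i j, i < comps.length → j < comps.length → i ≠ j →
    ∀ c ∈ comps.getD i ∅, ∀ d ∈ comps.getD j ∅, ¬ Adj c d)

/-- Restrict a filling to a sub-shape. -/
def restrict (u : Finset Cell) (T : Cell → Finset ℕ) : Cell → Finset ℕ :=
  fun c => if c ∈ u then T c else ∅

/-! ### The Burge correspondence (interface) -/

structure BurgeOut where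
  sh : Finset Cell
  P : Cell → ℕ
  Q : Cell → ℕ

/-- The Burge correspondence: a bijection between biwords and pairs of semistandard
Young tableaux of the same partition shape, the insertion tableau `P` being Knuth
equivalent to the bottom word and the recording tableau `Q` having the content of the
top word. -/
structure BurgeData where
  out : List ℕ → List ℕ → BurgeOut
  shape_part : ∀ top bot, IsBiword top bot → IsPartitionShape (out top bot).sh
  ssytP : ∀ top bot, IsBiword top bot → IsSSYTOn (out top bot).sh (out top bot).P
  ssytQ : ∀ top bot, IsBiword top bot → IsSSYTOn (out top bot).sh (out top bot).Q
  knuthP : ∀ top bot, IsBiword top bot →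
    KnuthEquiv (readingWordOn (out top bot).sh (out top bot).P) bot
  contentP : ∀ top bot, IsBiword top bot →
    ∀ v, wtS (out top bot).sh (out top bot).P v = bot.count v
  contentQ : ∀ top bot, IsBiword top bot →
    ∀ v, wtS (out top bot).sh (out top bot).Q v = top.count v
  inj : ∀ top bot top' bot', IsBiword top bot → IsBiword top' bot' →
    out top bot = out top' bot' → top = top' ∧ bot = bot'
  surj : ∀ (sh : Finset Cell) (P Q : Cell → ℕ), IsPartitionShape sh →
    IsSSYTOn sh P → IsSSYTOn sh Q →
    ∃ top bot, IsBiword top bot ∧ out top bot = ⟨sh, P, Q⟩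

/-! ### The Chan–Pflueger skew set-valued row insertion (interface) -/

structure CPOut where
  sTil : Finset Cell
  Q : Cell → ℕ
  Til : Cell → ℕ

/-- The conditions satisfied by the output `(θ̃, Q'', T̃)` of the Chan–Pflueger
insertion applied to a set-valued tableau of connected skew shape `s` with excess `e`. -/
def CPTarget (n : ℕ) (s : Finset Cell) (e : ℕ → ℕ) (o : CPOut) : Prop :=
  s ⊆ o.sTil ∧ IsSkewShape o.sTil ∧ ConnectedShape o.sTil ∧
  (∀ c ∈ o.sTil, ∃ r, (r, c.2) ∈ s) ∧
  (∀ c ∈ o.sTil, c ∉ s → ∃ r, r < c.1 ∧ (r, c.2) ∈ s) ∧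
  IsRevRowStrictOn (o.sTil \ s) o.Q ∧ IsRowBounded (o.sTil \ s) o.Q ∧
  (∀ r, wtS (o.sTil \ s) o.Q (r + 1) = e r) ∧
  IsSSYTOn o.sTil o.Til ∧ (∀ c ∈ o.sTil, o.Til c ≤ n)

/-- Interface for the Chan–Pflueger skew set-valued row insertion (Algorithm 3.12 of
Chan–Pflueger): for each set-valued tableau `T` of connected skew shape `s` it
produces the final output `out s T = (θ̃, Q'', T̃)` together with the full sequence of
intermediate set-valued tableaux `steps s T`, each step adding one box. -/
structure CPData (n : ℕ) where
  out : Finset Cell → (Cell → Finset ℕ) → CPOut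
  steps : Finset Cell → (Cell → Finset ℕ) → List (Finset Cell × (Cell → Finset ℕ))
  valid : ∀ s T, IsSkewShape s → ConnectedShape s → IsSVTOn n s T →
    CPTarget n s (exRow s T) (out s T) ∧
    (∀ v, wtS (out s T).sTil (out s T).Til v = wtOn s T v)
  steps_first : ∀ s T, IsSkewShape s → ConnectedShape s → IsSVTOn n s T →
    (steps s T).head? = some (s, T)
  steps_last : ∀ s T, IsSkewShape s → ConnectedShape s → IsSVTOn n s T →
    (steps s T).getLast? = some ((out s T).sTil, svtOf (out s T).Til)
  steps_svt : ∀ s T, IsSkewShape s → ConnectedShape s → IsSVTOn n s T →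
    ∀ p ∈ steps s T, IsSVTOn n p.1 p.2
  steps_len : ∀ s T, IsSkewShape s → ConnectedShape s → IsSVTOn n s T →
    (steps s T).length = exTotal s T + 1
  steps_add : ∀ s T, IsSkewShape s → ConnectedShape s → IsSVTOn n s T →
    ∀ j, j + 1 < (steps s T).length →
      ((steps s T).getD j (∅, fun _ => ∅)).1 ⊆ ((steps s T).getD (j + 1) (∅, fun _ => ∅)).1 ∧
      (((steps s T).getD (j + 1) (∅, fun _ => ∅)).1 \
        ((steps s T).getD j (∅, fun _ => ∅)).1).card = 1
  bij : ∀ s, IsSkewShape s → ConnectedShape s → ∀ (e : ℕ → ℕ) (o : CPOut),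
    CPTarget n s e o →
    ∃! T : {T : Cell → Finset ℕ // IsSVTOn n s T ∧ ∀ r, exRow s T r = e r}, out s T.1 = o

/-- The rows (0-indexed) of the boxes added at the successive steps of the insertion. -/
def addedRows (n : ℕ) (cp : CPData n) (s : Finset Cell) (T : Cell → Finset ℕ) : List ℕ :=
  (List.range ((cp.steps s T).length - 1)).map (fun j =>
    ((((cp.steps s T).getD (j + 1) (∅, fun _ => ∅)).1 \
      (((cp.steps s T).getD j (∅, fun _ => ∅)).1)).sup Prod.fst))

/-- The sequence of flags `Φ^{(j)}`: when a box is added in (0-indexed) row `r`, the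
flag value of row `r` is replaced by the flag value of row `r - 1`. -/
def flagSeq (Φ : ℕ → ℕ) (ks : List ℕ) : ℕ → (ℕ → ℕ)
  | 0 => Φ
  | j + 1 => fun r => if r = ks.getD j 0 then flagSeq Φ ks j (r - 1) else flagSeq Φ ks j r

/-- The flag `Φ̃` induced by the insertion of `T`. -/
def inducedFlag (n : ℕ) (cp : CPData n) (s : Finset Cell) (T : Cell → Finset ℕ)
    (Φ : ℕ → ℕ) : ℕ → ℕ :=
  flagSeq Φ (addedRows n cp s T) (addedRows n cp s T).length

/-! ### Compatible tableaux for SVT -/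

def compTilShapes (n : ℕ) (cp : CPData n) (comps : List (Finset Cell))
    (T : Cell → Finset ℕ) : List (Finset Cell) :=
  comps.map (fun θ => (cp.out θ (restrict θ T)).sTil)

def compTilQs (n : ℕ) (cp : CPData n) (comps : List (Finset Cell))
    (T : Cell → Finset ℕ) : List (Cell → ℕ) :=
  comps.map (fun θ => (cp.out θ (restrict θ T)).Q)

def compTilTabs (n : ℕ) (cp : CPData n) (comps : List (Finset Cell))
    (T : Cell → Finset ℕ) : List (Cell → ℕ) :=
  comps.map (fun θ => (cp.out θ (restrict θ T)).Til)

/-- The composite shape `σ = σ_k * ⋯ * σ_1` of the insertion outputs. -/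
def insShape (n : ℕ) (cp : CPData n) (comps : List (Finset Cell))
    (T : Cell → Finset ℕ) : Finset Cell :=
  compositeShape (compTilShapes n cp comps T)

/-- The composite tableau `T̃ = T̃_k * ⋯ * T̃_1` of the insertion outputs. -/
def insTab (n : ℕ) (cp : CPData n) (comps : List (Finset Cell))
    (T : Cell → Finset ℕ) : Cell → ℕ :=
  compositeTab (compTilShapes n cp comps T) (compTilTabs n cp comps T)

/-- The restriction of a global flag to the row block of the `i`-th component. -/
def componentFlag (comps : List (Finset Cell)) (Φ : ℕ → ℕ) (i : ℕ) : ℕ → ℕ :=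
  fun r => Φ (rowOffset comps i + (r - minRowOf (comps.getD i ∅)))

/-- The composite induced flag `Φ̃ = Φ̃_1 * ⋯ * Φ̃_k`. -/
def insFlag (n : ℕ) (cp : CPData n) (comps : List (Finset Cell))
    (T : Cell → Finset ℕ) (Φ : ℕ → ℕ) : ℕ → ℕ :=
  compositeFlag (compTilShapes n cp comps T)
    ((List.range comps.length).map (fun i => fun p =>
      inducedFlag n cp (comps.getD i ∅) (restrict (comps.getD i ∅) T)
        (componentFlag comps Φ i) (minRowOf (comps.getD i ∅) + p)))

/-- The Burge correspondence applied to `⌊b(σ); r_{T̃}⌋`. -/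
def insBurge (n : ℕ) (B : BurgeData) (cp : CPData n) (comps : List (Finset Cell))
    (T : Cell → Finset ℕ) : BurgeOut :=
  B.out (bwordOn (insShape n cp comps T))
    (readingWordOn (insShape n cp comps T) (insTab n cp comps T))

/-- `p = (sh, rect(P̃), R)` arises from a highest weight element `P` of
`SVT(λ/μ, Φ)` of excess `e`; `R = p.Q` is then a `(λ/μ, Φ)`-compatible tableau
for SVT with `ex(R) = e`. -/
def IsCompatibleSVT (n : ℕ) (B : BurgeData) (cp : CPData n) (s : Finset Cell)
    (comps : List (Finset Cell)) (Φ : ℕ → ℕ) (e : ℕ → ℕ) (p : BurgeOut) : Prop :=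
  ∃ P : Cell → Finset ℕ, IsSVTOn n s P ∧ RespectsFlag Φ P ∧ HighestWeight n P ∧
    (∀ r, exRow s P r = e r) ∧ insBurge n B cp comps P = p

/-- Compatible of arbitrary excess. -/
def IsCompatibleSVT' (n : ℕ) (B : BurgeData) (cp : CPData n) (s : Finset Cell)
    (comps : List (Finset Cell)) (Φ : ℕ → ℕ) (p : BurgeOut) : Prop :=
  ∃ P : Cell → Finset ℕ, IsSVTOn n s P ∧ RespectsFlag Φ P ∧ HighestWeight n P ∧
    insBurge n B cp comps P = p

/-- The set `SVT_e(θ, Φ; θ̃, Q'')`. -/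
def PieceSet (n : ℕ) (cp : CPData n) (s : Finset Cell) (comps : List (Finset Cell))
    (Φ e : ℕ → ℕ) (tilShapes : List (Finset Cell)) (Qs : List (Cell → ℕ)) :
    Set (Cell → Finset ℕ) :=
  {T | IsSVTOn n s T ∧ RespectsFlag Φ T ∧ (∀ r, exRow s T r = e r) ∧
       compTilShapes n cp comps T = tilShapes ∧ compTilQs n cp comps T = Qs}

/-- The set `A(R, ν, Ψ)` of flagged tableaux of shape `ν` whose Burge pair is
`(rect(T), R)`. -/
def ASet (n : ℕ) (B : BurgeData) (sTil : Finset Cell) (Ψflag : ℕ → ℕ) (R : BurgeOut) :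
    Set (Cell → ℕ) :=
  {U | IsSSYTOn sTil U ∧ (∀ c ∈ sTil, U c ≤ n) ∧ RespectsFlagS sTil Ψflag U ∧
       (B.out (bwordOn sTil) (readingWordOn sTil U)).sh = R.sh ∧
       (B.out (bwordOn sTil) (readingWordOn sTil U)).Q = R.Q}

/-! ### Left keys and the Reiner–Shimozono flag compression (interfaces) -/

def colSetOf (sh : Finset Cell) (K : Cell → ℕ) (j : ℕ) : Set ℕ :=
  {v | ∃ i, (i, j) ∈ sh ∧ K (i, j) = v}

/-- A key tableau: the entries of each column contain those of the next column. -/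
def IsKeyTab (sh : Finset Cell) (K : Cell → ℕ) : Prop :=
  IsSSYTOn sh K ∧ ∀ j, colSetOf sh K (j + 1) ⊆ colSetOf sh K j

/-- Interface providing the left key `K₋(R)` of a semistandard Young tableau. -/
structure LeftKeyData where
  lk : Finset Cell → (Cell → ℕ) → (Cell → ℕ)
  key : ∀ sh R, IsPartitionShape sh → IsSSYTOn sh R → IsKeyTab sh (lk sh R)
  knuth : ∀ sh R, IsPartitionShape sh → IsSSYTOn sh R →
    ∀ v, wtS sh (lk sh R) v ≤ wtS sh R v + wtS sh R v + 1  -- (weakly specified)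

/-- `β(R)`: the weight of the left key of the recording tableau `R = p.Q`. -/
def betaOf (L : LeftKeyData) (p : BurgeOut) : ℕ → ℕ :=
  fun r => wtS p.sh (L.lk p.sh p.Q) (r + 1)

/-- concatenation of the factors `v^{(n)} ⋯ v^{(1)}` (factor `n-1` first, 0-indexed). -/
def wordOfFactors (n : ℕ) (v : ℕ → List ℕ) : List ℕ :=
  ((List.range n).reverse.map v).flatten

/-- The set `𝒲(α, Φ)` of Reiner–Shimozono: words `v = v^{(n)} ⋯ v^{(1)}` into maximal
row words of lengths `α_i`, letters of `v^{(i)}` at most `Φ_i`, whose Burge recording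
tableau for the biword `⌊b(α); v⌋` is `key(α)` (the unique SSYT of shape `α†` and
weight `α`). -/
def WSet (n : ℕ) (B : BurgeData) (α : ℕ → ℕ) (Φ : ℕ → ℕ) : Set (ℕ → List ℕ) :=
  {v | (∀ i, n ≤ i → v i = []) ∧
       (∀ i, (v i).length = α i) ∧
       (∀ i, (v i).Chain' (· ≤ ·)) ∧
       (∀ i, ∀ x ∈ v i, 1 ≤ x ∧ x ≤ Φ i) ∧
       (∀ i i', i' < i → v i ≠ [] → v i' ≠ [] →
          (∀ m, i' < m → m < i → v m = []) → (v i').headI < (v i).getLastD 0) ∧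
       (∀ r, rowLenOf (B.out (bwordComp n α) (wordOfFactors n v)).sh r = dsort n α r) ∧
       (∀ u, wtS (B.out (bwordComp n α) (wordOfFactors n v)).sh
               (B.out (bwordComp n α) (wordOfFactors n v)).Q u =
             if 1 ≤ u ∧ u ≤ n then α (u - 1) else 0)}

/-- Interface for the Reiner–Shimozono flag compression `β ↦ β̂` (relative to a flag):
`β̂† = β†` and there is a Knuth-equivalence-preserving bijection
`ζ : 𝒲(β, Φ) → 𝒲(β̂, Φ₀)`. -/
structure RSHatData (n : ℕ) (B : BurgeData) where
  hat : (ℕ → ℕ) → (ℕ → ℕ) → (ℕ → ℕ)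
  sorted : ∀ α Φ, IsFlag n Φ → ∀ i, dsort n (hat α Φ) i = dsort n α i
  zeta : ∀ α Φ, IsFlag n Φ → (WSet n B α Φ).Nonempty →
    ∃ ζ : (ℕ → List ℕ) → (ℕ → List ℕ),
      Set.BijOn ζ (WSet n B α Φ) (WSet n B (hat α Φ) (fun i => i + 1)) ∧
      ∀ v ∈ WSet n B α Φ, KnuthEquiv (wordOfFactors n v) (wordOfFactors n (ζ v))

/-! ### Compatible tableaux for RPP -/

/-- `(q, T')` witnesses that `q.Q` is a `(λ/μ, Φ)`-compatible tableau for RPP: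
`T'` is the unique flagged RPP of shape `s` with Yamanouchi row reading word whose
Burge recording tableau (for the biword `⌊h(T'); r_{T'}⌋`) is `q.Q`; and
`ceq(q.Q) := ceq(T')`. -/
def IsCompatibleRPP (n : ℕ) (B : BurgeData) (s : Finset Cell) (Φ : ℕ → ℕ)
    (q : BurgeOut) (T' : Cell → ℕ) : Prop :=
  (IsRPPOn s T' ∧ RespectsFlagS s Φ T' ∧ IsYamanouchi (rppRowWord s T') ∧
    B.out (rppHeights s T') (rppRowWord s T') = q) ∧
  (∀ T'' : Cell → ℕ,
    (IsRPPOn s T'' ∧ RespectsFlagS s Φ T'' ∧ IsYamanouchi (rppRowWord s T'') ∧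
      (B.out (rppHeights s T'') (rppRowWord s T'')).Q = q.Q) → T'' = T')

/-!
The Greene invariants of a word do not change under Knuth equivalence and determine the shape of
the tableau it inserts to. Hence `v ∈ 𝒲(α, Φ)` says only that the `v⁽ⁱ⁾` are weakly increasing
words of lengths `α_i` with letters bounded by `Φ`, and that the Greene invariants of their product
are the partial sums of `α†`. Recolouring two rows shows that no longer increasing subword runs
through them than the longer of the two, so that the letters of one row, suitably aligned, strictly
dominate those of the other.

When `Φ_i = Φ_{i+1}`, this makes the row insertion of `v⁽ⁱ⁾` into `v⁽ⁱ⁺¹⁾` an invertible exchange of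
the two row lengths that stays in the plactic class: `𝒲(α, Φ)` and `𝒲(s_i α, Φ)` are in
Knuth-preserving bijection. So one may assume `α_i ≤ α_{i+1}`, and then strict domination allows
`Φ_i` to be lowered by one without changing `𝒲(α, Φ)`. The flag on an empty row is immaterial, so
the empty rows can first be moved to the end; if `𝒲(α, Φ)` is not empty, this forces `i ≤ Φ_i` for
all `i`, and repeated lowering ends at `(1, 2, …, n)`.
-/

section FlagCompression

-- Decidability instances for `ℕ` and `Finset` should take precedence over the classical one.
attribute [-instance] Classical.propDecidable
attribute [local instance 5] Classical.propDecidable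

/-! ### Greene invariants of a word -/

section Greene

variable {α κ : Type*} [LinearOrder α]

/-- Compatibility of two coloured letters `(letter, colour)`, the first preceding the second: if
they share a colour of `S`, they weakly increase. Colours outside `S` stand for "uncoloured". -/
def SameColorLE (S : Finset κ) (a b : α × κ) : Prop :=
  a.2 ∈ S → a.2 = b.2 → a.1 ≤ b.1

variable [DecidableEq κ]

/-- Greene's invariant in the form of an inequality: `w` has `#S` disjoint weakly increasing
subwords, one for each colour in `S`, of total length at least `m`. -/
def IncColorable (S : Finset κ) (m : ℕ) (w : List α) : Prop :=
  ∃ L : List (α × κ), L.map Prod.fst = w ∧ L.Pairwise (SameColorLE S) ∧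
    m ≤ L.countP (fun a => a.2 ∈ S)

variable {S : Finset κ} {m m' : ℕ} {u w : List α} {x y z : α}

theorem IncColorable.mono (h : IncColorable S m w) (hm : m' ≤ m) : IncColorable S m' w := by
  obtain ⟨L, hL, hpair, hcount⟩ := h
  exact ⟨L, hL, hpair, hm.trans hcount⟩

theorem IncColorable.map_reverse {β : Type*} [LinearOrder β] {f : α → β} (hf : Antitone f)
    (h : IncColorable S m w) : IncColorable S m (w.reverse.map f) := by
  obtain ⟨L, rfl, hL, hm⟩ := h
  refine ⟨L.reverse.map (Prod.map f id), by simp [List.map_reverse], ?_, ?_⟩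
  · rw [List.pairwise_map, List.pairwise_reverse]
    exact hL.imp fun {a b} hab hb (hba : b.2 = a.2) => hf (hab (hba ▸ hb) hba.symm)
  · simpa [List.countP_map, Function.comp_def] using hm

theorem IncColorable.swap_descent (hxz : x < z) (h : IncColorable S m (u ++ z :: x :: w)) :
    IncColorable S m (u ++ x :: z :: w) := by
  obtain ⟨L, hw, hL, hm⟩ := h
  simp only [List.map_eq_append_iff, List.map_eq_cons_iff] at hw
  obtain ⟨Lu, _, rfl, rfl, ⟨z, c⟩, _, rfl, rfl, ⟨x, d⟩, Lw, rfl, rfl, rfl⟩ := hw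
  refine ⟨Lu ++ (x, d) :: (z, c) :: Lw, by simp, ?_, ?_⟩
  · simp only [List.pairwise_append, List.pairwise_cons, List.mem_cons] at hL ⊢
    have : SameColorLE S (x, d) (z, c) := fun _ _ => hxz.le
    grind
  · simp only [List.countP_append, List.countP_cons] at hm ⊢
    omega

theorem IncColorable.swap_ascent_of_le_of_lt (hxy : x ≤ y) (hyz : y < z)
    (h : IncColorable S m (u ++ x :: z :: y :: w)) :
    IncColorable S m (u ++ z :: x :: y :: w) := by
  obtain ⟨L, hw, hL, hm⟩ := h
  simp only [List.map_eq_append_iff, List.map_eq_cons_iff] at hw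
  obtain ⟨Lu, _, rfl, rfl, ⟨x, c⟩, _, rfl, rfl, ⟨z, c'⟩, _, rfl, rfl, ⟨y, d⟩, Lw, rfl, rfl, rfl⟩ :=
    hw
  simp only [List.pairwise_append, List.pairwise_cons, List.mem_cons, forall_eq_or_imp] at hL
  obtain ⟨hLu, ⟨⟨hxz, hxy', hxw⟩, ⟨hzy, hzw⟩, hyw, hLw⟩, hu⟩ := hL
  simp only [List.countP_append, List.countP_cons] at hm
  by_cases hcc : c ∈ S ∧ c = c'
  · obtain ⟨hc, rfl⟩ := hcc
    have : c ≠ d := fun hcd => hyz.not_ge (hzy hc hcd)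
    let σ : Equiv.Perm κ := if d ∈ S then Equiv.swap c d else Equiv.refl κ
    have hσ (k : κ) : σ k ∈ S ↔ k ∈ S := by grind
    refine ⟨Lu ++ (z, d) :: (x, c) :: (y, c) :: Lw.map (Prod.map id σ), by simp, ?_, ?_⟩
    · simp only [List.pairwise_append, List.pairwise_cons, List.mem_cons, forall_eq_or_imp,
        List.forall_mem_map, List.pairwise_map]
      refine ⟨hLu, ⟨⟨?_, ?_, ?_⟩, ⟨?_, ?_⟩, ?_, ?_⟩, ?_⟩
      case refine_7 =>
        exact hLw.imp fun hab ha hab' => hab ((hσ _).1 ha) (σ.injective hab')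
      all_goals simp only [SameColorLE, Prod.map_snd, Prod.map_fst, id] at *
      all_goals grind
    · simp only [List.countP_append, List.countP_cons, List.countP_map, Function.comp_def,
        Prod.map_snd, hσ]
      omega
  · refine ⟨Lu ++ (z, c') :: (x, c) :: (y, d) :: Lw, by simp, ?_, ?_⟩
    · simp only [List.pairwise_append, List.pairwise_cons, List.mem_cons, forall_eq_or_imp]
      have : SameColorLE S (z, c') (x, c) := by rintro hc' rfl; exact absurd ⟨hc', rfl⟩ hcc
      grind
    · simp only [List.countP_append, List.countP_cons]
      omega

open OrderDual in
theorem IncColorable.swap_ascent_of_lt_of_le (hxy : x < y) (hyz : y ≤ z)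
    (h : IncColorable S m (u ++ y :: x :: z :: w)) :
    IncColorable S m (u ++ y :: z :: x :: w) := by
  have hdual : IncColorable S m (w.reverse.map toDual ++
      toDual z :: toDual x :: toDual y :: u.reverse.map toDual) := by
    simpa using h.map_reverse (f := toDual) fun _ _ hab => hab
  have hyz' : toDual z ≤ toDual y := hyz
  have hxy' : toDual y < toDual x := hxy
  have hswap := (hdual.swap_ascent_of_le_of_lt hyz' hxy').map_reverse
    (f := ofDual) fun _ _ hab => hab
  simpa [List.map_reverse, Function.comp_def] using hswap

theorem incColorable_iff_of_knuthEquiv {S : Finset κ} {v w : List ℕ} (h : KnuthEquiv v w) :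
    IncColorable S m v ↔ IncColorable S m w := by
  induction h with
  | rel _ _ h =>
    cases h with
    | kxzy u w x y z hxy hyz =>
      exact ⟨.swap_ascent_of_le_of_lt hxy hyz, .swap_descent (hxy.trans_lt hyz)⟩
    | kyxz u w x y z hxy hyz =>
      have hzx := IncColorable.swap_descent (S := S) (m := m) (u := u ++ [y]) (w := w)
        (hxy.trans_le hyz)
      simp only [List.append_assoc, List.singleton_append] at hzx
      exact ⟨.swap_ascent_of_lt_of_le hxy hyz, hzx⟩
  | refl _ => rfl
  | symm _ _ _ ih => exact ih.symm
  | trans _ _ _ _ _ h₁ h₂ => exact h₁.trans h₂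

end Greene

/-! ### Greene invariants of a tableau -/

section Tableau

variable {s : Finset Cell} {T : Cell → ℕ}

theorem mem_rowList {i j : ℕ} : j ∈ rowList s i ↔ (i, j) ∈ s := by
  simp only [rowList, List.mem_filter, List.mem_range, decide_eq_true_eq, and_iff_right_iff_imp]
  exact fun h => Nat.lt_succ_of_le (Finset.le_sup (f := Prod.snd) h)

theorem rowList_pairwise_lt (s : Finset Cell) (i : ℕ) : (rowList s i).Pairwise (· < ·) :=
  List.pairwise_lt_range.filter _

theorem rowLenOf_eq_card (s : Finset Cell) (i : ℕ) :
    rowLenOf s i = (s.filter (fun c => c.1 = i)).card := by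
  have hnodup : (rowList s i).Nodup := (rowList_pairwise_lt s i).imp fun h => h.ne
  rw [rowLenOf, ← List.toFinset_card_of_nodup hnodup,
    ← Finset.card_image_of_injective _ (Prod.mk_right_injective i)]
  congr 1
  ext c
  grind [mem_rowList, List.mem_toFinset]

theorem sum_rowLenOf (s : Finset Cell) (k : ℕ) :
    ∑ i ∈ Finset.range k, rowLenOf s i = (s.filter (fun c => c.1 < k)).card := by
  rw [Finset.card_eq_sum_card_fiberwise (f := Prod.fst) (t := Finset.range k)
    fun c hc => by simpa using (Finset.mem_filter.1 hc).2]
  refine Finset.sum_congr rfl fun i hi => ?_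
  rw [rowLenOf_eq_card, Finset.filter_filter]
  congr 1
  ext c
  grind

/-- The cells of `s`, in the order in which `readingWordOn` reads them. -/
def readingCells (s : Finset Cell) : List Cell :=
  ((List.range (s.sup Prod.fst + 1)).reverse.map
    (fun i => (rowList s i).map (fun j => (i, j)))).flatten

/-- The strict total order on cells underlying `readingCells`: lower rows first, each row from
left to right. -/
def ReadsBefore (c d : Cell) : Prop := d.1 < c.1 ∨ (c.1 = d.1 ∧ c.2 < d.2)

instance : Std.Asymm ReadsBefore := ⟨fun _ _ => by unfold ReadsBefore; omega⟩

theorem readingWordOn_eq_map (s : Finset Cell) (T : Cell → ℕ) :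
    readingWordOn s T = (readingCells s).map T := by
  simp only [readingWordOn, readingCells, List.map_flatten, List.map_map]
  congr! 2
  funext i
  simp [rowWordOn]

theorem mem_readingCells {c : Cell} : c ∈ readingCells s ↔ c ∈ s := by
  obtain ⟨i, j⟩ := c
  simp only [readingCells, List.mem_flatten, List.mem_map, List.mem_reverse, List.mem_range]
  constructor
  · rintro ⟨_, ⟨i', -, rfl⟩, h⟩
    simp only [List.mem_map, mem_rowList, Prod.mk.injEq] at h
    obtain ⟨_, h, rfl, rfl⟩ := h
    exact h
  · exact fun h => ⟨_, ⟨i, Nat.lt_succ_of_le (Finset.le_sup (f := Prod.fst) h), rfl⟩,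
      by simpa [mem_rowList] using h⟩

theorem readingCells_pairwise (s : Finset Cell) : (readingCells s).Pairwise ReadsBefore := by
  refine List.pairwise_flatten.2 ⟨List.forall_mem_map.2 fun i _ => ?_, ?_⟩
  · exact List.pairwise_map.2 ((rowList_pairwise_lt s i).imp fun h => .inr ⟨rfl, h⟩)
  · rw [List.pairwise_map, List.pairwise_reverse]
    refine List.pairwise_lt_range.imp fun hab => ?_
    simp only [List.forall_mem_map]
    exact fun _ _ _ _ => .inl hab

theorem readingCells_nodup (s : Finset Cell) : (readingCells s).Nodup :=
  (readingCells_pairwise s).imp fun {c d} h hcd => by subst hcd; exact asymm h h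

theorem countP_readingCells (s : Finset Cell) (p : Cell → Prop) [DecidablePred p] :
    (readingCells s).countP (fun c => p c) = (s.filter p).card := by
  rw [List.countP_eq_length_filter,
    ← List.toFinset_card_of_nodup ((readingCells_nodup s).filter _)]
  congr 1
  ext c
  simp [mem_readingCells]

theorem IsSSYTOn.row_le (hs : IsPartitionShape s) (hT : IsSSYTOn s T) {i j j' : ℕ} (hj : j ≤ j')
    (h : (i, j') ∈ s) : T (i, j) ≤ T (i, j') := by
  induction hj with
  | refl => rfl
  | @step j' _ ih =>
    have hmem : (i, j') ∈ s := hs _ _ _ _ h le_rfl j'.le_succ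
    exact (ih hmem).trans (hT.2.2.1 i j' hmem h)

theorem IsSSYTOn.col_lt (hs : IsPartitionShape s) (hT : IsSSYTOn s T) {i i' j : ℕ} (hi : i < i')
    (h : (i', j) ∈ s) : T (i, j) < T (i', j) := by
  induction hi with
  | refl => exact hT.2.2.2 i j (hs _ _ _ _ h i.le_succ le_rfl) h
  | @step i' _ ih =>
    have hmem : (i', j) ∈ s := hs _ _ _ _ h i'.le_succ le_rfl
    exact (ih hmem).trans (hT.2.2.2 i' j hmem h)

theorem incColorable_readingWordOn (hs : IsPartitionShape s) (hT : IsSSYTOn s T) (k : ℕ) :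
    IncColorable (Finset.range k) (∑ i ∈ Finset.range k, rowLenOf s i) (readingWordOn s T) := by
  refine ⟨(readingCells s).map (fun c => (T c, c.1)), ?_, ?_, ?_⟩
  · simp [readingWordOn_eq_map, Function.comp_def]
  · refine List.pairwise_map.2 ((readingCells_pairwise s).imp_of_mem ?_)
    rintro ⟨i, j⟩ ⟨i', j'⟩ - hd hcd - (rfl : i = i')
    exact hT.row_le hs (by simp only [ReadsBefore] at hcd; omega) (mem_readingCells.1 hd)
  · rw [sum_rowLenOf, List.countP_map, ← countP_readingCells]
    simp [Function.comp_def]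

theorem exists_eq_map_of_map_fst_eq {ι α κ : Type*} [Nonempty κ] {C : List ι} (hC : C.Nodup)
    {t : ι → α} {L : List (α × κ)} (hL : L.map Prod.fst = C.map t) :
    ∃ f : ι → κ, L = C.map (fun c => (t c, f c)) := by
  classical
  induction C generalizing L with
  | nil => exact ⟨fun _ => Classical.arbitrary κ, by simpa using hL⟩
  | cons c C ih =>
    obtain ⟨⟨_, k⟩, L, rfl, rfl, hL'⟩ := List.map_eq_cons_iff.1 hL
    obtain ⟨hc, hC⟩ := List.nodup_cons.1 hC
    obtain ⟨f, rfl⟩ := ih hC hL'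
    refine ⟨Function.update f c k, ?_⟩
    rw [List.map_cons, Function.update_self]
    congr 1
    exact List.map_congr_left fun d hd => by
      rw [Function.update_of_ne (ne_of_mem_of_not_mem hd hc)]

theorem rel_of_pairwise_of_pairwise {ι : Type*} {R Q : ι → ι → Prop} [Std.Asymm R] {l : List ι}
    (hR : l.Pairwise R) (hQ : l.Pairwise Q) {a b : ι} (ha : a ∈ l) (hb : b ∈ l) (hab : R a b) :
    Q a b := by
  induction l with
  | nil => simp at ha
  | cons c l ih =>
    rw [List.pairwise_cons] at hR hQ
    rcases List.mem_cons.1 ha with rfl | ha' <;> rcases List.mem_cons.1 hb with rfl | hb'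
    · exact absurd hab (asymm hab)
    · exact hQ.1 b hb'
    · exact absurd hab (asymm (hR.1 a ha'))
    · exact ih hR.2 hQ.2 ha' hb'

theorem card_filter_column_le {κ : Type*} [DecidableEq κ] (hs : IsPartitionShape s) {S : Finset κ}
    {f : Cell → κ} (j : ℕ)
    (hf : ∀ i i', i < i' → (i', j) ∈ s → f (i, j) ∈ S → f (i, j) ≠ f (i', j)) :
    (s.filter (fun c => f c ∈ S ∧ c.2 = j)).card ≤
      (s.filter (fun c => c.1 < S.card ∧ c.2 = j)).card := by
  by_cases hcol : ∃ i, (i, j) ∈ s ∧ S.card ≤ i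
  · obtain ⟨i, hi, hSi⟩ := hcol
    have hle : (s.filter (fun c => f c ∈ S ∧ c.2 = j)).card ≤ S.card := by
      refine Finset.card_le_card_of_injOn f (fun c hc => (Finset.mem_filter.1 hc).2.1) ?_
      rintro ⟨a, _⟩ ha₀ ⟨b, _⟩ hb₀ hab
      obtain ⟨ha, haS, rfl⟩ := Finset.mem_filter.1 ha₀
      obtain ⟨hb, hbS, rfl⟩ := Finset.mem_filter.1 hb₀
      rcases lt_trichotomy a b with hlt | rfl | hlt
      · exact absurd hab (hf a b hlt hb haS)
      · rfl
      · exact absurd hab.symm (hf b a hlt ha hbS)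
    refine hle.trans ?_
    have hsub : (Finset.range S.card).image (·, j) ⊆
        s.filter (fun c => c.1 < S.card ∧ c.2 = j) := by
      simp only [Finset.image_subset_iff, Finset.mem_range, Finset.mem_filter, and_true]
      exact fun a ha => ⟨hs _ _ _ _ hi (by omega) le_rfl, ha⟩
    simpa [Finset.card_image_of_injective _ (Prod.mk_left_injective j)]
      using Finset.card_le_card hsub
  · push Not at hcol
    refine Finset.card_le_card fun c hc₀ => ?_
    obtain ⟨hc, -, rfl⟩ := Finset.mem_filter.1 hc₀
    exact Finset.mem_filter.2 ⟨hc, hcol c.1 hc, rfl⟩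

theorem le_sum_rowLenOf_of_incColorable {κ : Type*} [DecidableEq κ] [Nonempty κ]
    (hs : IsPartitionShape s) (hT : IsSSYTOn s T) {S : Finset κ} {m : ℕ}
    (h : IncColorable S m (readingWordOn s T)) :
    m ≤ ∑ i ∈ Finset.range S.card, rowLenOf s i := by
  obtain ⟨L, hL, hpair, hm⟩ := h
  rw [readingWordOn_eq_map] at hL
  obtain ⟨f, rfl⟩ := exists_eq_map_of_map_fst_eq (readingCells_nodup s) hL
  rw [List.pairwise_map] at hpair
  have hcol (j i i' : ℕ) (hi : i < i') (hmem : (i', j) ∈ s) (hS : f (i, j) ∈ S) :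
      f (i, j) ≠ f (i', j) := fun heq =>
    (hT.col_lt hs hi hmem).not_ge <|
      rel_of_pairwise_of_pairwise (readingCells_pairwise s) hpair (mem_readingCells.2 hmem)
        (mem_readingCells.2 (hs _ _ _ _ hmem hi.le le_rfl)) (.inl hi) (heq ▸ hS) heq.symm
  calc m ≤ (s.filter (fun c => f c ∈ S)).card := by
        simpa only [List.countP_map, Function.comp_def, countP_readingCells] using hm
    _ ≤ (s.filter (fun c => c.1 < S.card)).card := by
        have himage (p : Cell → Prop) [DecidablePred p] :
            Set.MapsTo Prod.snd (s.filter p : Set Cell) (s.image Prod.snd) := fun c hc =>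
          Finset.mem_image_of_mem _ (Finset.mem_filter.1 hc).1
        rw [Finset.card_eq_sum_card_fiberwise (himage _),
          Finset.card_eq_sum_card_fiberwise (himage _)]
        simp only [Finset.filter_filter]
        exact Finset.sum_le_sum fun j _ => card_filter_column_le hs j (hcol j)
    _ = ∑ i ∈ Finset.range S.card, rowLenOf s i := (sum_rowLenOf s _).symm

end Tableau

/-! ### Knuth equivalence and row insertion -/

theorem KnuthStep.append {v w : List ℕ} (h : KnuthStep v w) (p q : List ℕ) :
    KnuthStep (p ++ v ++ q) (p ++ w ++ q) := by
  cases h with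
  | kxzy u w x y z hxy hyz => simpa using KnuthStep.kxzy (p ++ u) (w ++ q) x y z hxy hyz
  | kyxz u w x y z hxy hyz => simpa using KnuthStep.kyxz (p ++ u) (w ++ q) x y z hxy hyz

namespace KnuthEquiv

variable {u v w : List ℕ}

theorem refl (w : List ℕ) : KnuthEquiv w w := Relation.EqvGen.refl w

theorem symm (h : KnuthEquiv v w) : KnuthEquiv w v := Relation.EqvGen.symm _ _ h

theorem trans (h : KnuthEquiv u v) (h' : KnuthEquiv v w) : KnuthEquiv u w :=
  Relation.EqvGen.trans _ _ _ h h'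

theorem append_left (p : List ℕ) (h : KnuthEquiv v w) : KnuthEquiv (p ++ v) (p ++ w) := by
  induction h with
  | rel _ _ h => exact Relation.EqvGen.rel _ _ (by simpa using h.append p [])
  | refl _ => exact refl _
  | symm _ _ _ ih => exact ih.symm
  | trans _ _ _ _ _ h₁ h₂ => exact h₁.trans h₂

theorem append_right (q : List ℕ) (h : KnuthEquiv v w) : KnuthEquiv (v ++ q) (w ++ q) := by
  induction h with
  | rel _ _ h => exact Relation.EqvGen.rel _ _ (by simpa using h.append [] q)
  | refl _ => exact refl _
  | symm _ _ _ ih => exact ih.symm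
  | trans _ _ _ _ _ h₁ h₂ => exact h₁.trans h₂

theorem kxzy {x y z : ℕ} (hxy : x ≤ y) (hyz : y < z) (w : List ℕ) :
    KnuthEquiv (x :: z :: y :: w) (z :: x :: y :: w) :=
  Relation.EqvGen.rel _ _ (by simpa using KnuthStep.kxzy [] w x y z hxy hyz)

theorem kyxz {x y z : ℕ} (hxy : x < y) (hyz : y ≤ z) (w : List ℕ) :
    KnuthEquiv (y :: x :: z :: w) (y :: z :: x :: w) :=
  Relation.EqvGen.rel _ _ (by simpa using KnuthStep.kyxz [] w x y z hxy hyz)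

theorem move_to_second {x y : ℕ} {B : List ℕ} (hxy : x < y) (hB : (y :: B).Pairwise (· ≤ ·)) :
    KnuthEquiv (y :: B ++ [x]) (y :: x :: B) := by
  induction B generalizing y with
  | nil => exact refl _
  | cons b B ih =>
    obtain ⟨hyB, hbB⟩ := List.pairwise_cons.1 hB
    have hyb : y ≤ b := hyB b List.mem_cons_self
    exact ((ih (hxy.trans_le hyb) hbB).append_left [y]).trans (kyxz hxy hyb B).symm

theorem move_to_front {x y : ℕ} {A B : List ℕ} (hxy : x < y) (hA : A.Pairwise (· ≤ ·))
    (hAx : ∀ a ∈ A, a ≤ x) : KnuthEquiv (A ++ y :: x :: B) (y :: A ++ x :: B) := by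
  induction A with
  | nil => exact refl _
  | cons a A ih =>
    obtain ⟨haA, hA⟩ := List.pairwise_cons.1 hA
    rw [List.forall_mem_cons] at hAx
    refine ((ih hA hAx.2).append_left [a]).trans ?_
    cases A with
    | nil => exact kxzy hAx.1 hxy B
    | cons c A =>
      exact kxzy (haA c List.mem_cons_self) ((hAx.2 c List.mem_cons_self).trans_lt hxy) _

end KnuthEquiv

section RowInsertion

open OrderDual (toDual ofDual)

variable {α β : Type*} [LinearOrder α] [LinearOrder β]

theorem strictAnti_toDual : StrictAnti (toDual : α → αᵒᵈ) :=
  strictAnti_toDual_comp_iff.2 strictMono_id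

theorem strictAnti_ofDual : StrictAnti (ofDual : αᵒᵈ → α) :=
  strictAnti_comp_ofDual_iff.2 strictMono_id

theorem append_cons_inj_of_forall {ι : Type*} {p : ι → Prop} {A A' B B' : List ι} {y y' : ι}
    (h : A ++ y :: B = A' ++ y' :: B') (hA : ∀ a ∈ A, p a) (hA' : ∀ a ∈ A', p a)
    (hy : ¬ p y) (hy' : ¬ p y') : A = A' ∧ y = y' ∧ B = B' := by
  classical
  have htake := congrArg (List.takeWhile p) h
  have hdrop := congrArg (List.dropWhile p) h
  rw [List.takeWhile_append_of_pos (by simpa using hA),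
    List.takeWhile_append_of_pos (by simpa using hA')] at htake
  rw [List.dropWhile_append_of_pos (by simpa using hA),
    List.dropWhile_append_of_pos (by simpa using hA')] at hdrop
  simpa [hy, hy'] using And.intro htake hdrop

/-- Row insertion of the letter `x` into the weakly increasing row `r`, in the case where `x` takes
the place of a letter `y`, the leftmost one exceeding `x`; the resulting row is `r'`. -/
def RowInsertion (r : List α) (x y : α) (r' : List α) : Prop :=
  ∃ A B : List α, r = A ++ y :: B ∧ r' = A ++ x :: B ∧
    A.Pairwise (· ≤ ·) ∧ B.Pairwise (· ≤ ·) ∧ (∀ a ∈ A, a ≤ x) ∧ x < y ∧ ∀ b ∈ B, y ≤ b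

namespace RowInsertion

variable {r r' q q' : List α} {x x' y y' : α}

theorem map_reverse {f : α → β} (hf : StrictAnti f) (h : RowInsertion r x y r') :
    RowInsertion (r'.reverse.map f) (f y) (f x) (r.reverse.map f) := by
  obtain ⟨A, B, rfl, rfl, hA, hB, hAx, hxy, hyB⟩ := h
  refine ⟨B.reverse.map f, A.reverse.map f, by simp, by simp, ?_, ?_, ?_, hf hxy, ?_⟩
  · simpa [List.pairwise_map, List.pairwise_reverse, hf.le_iff_ge] using hB
  · simpa [List.pairwise_map, List.pairwise_reverse, hf.le_iff_ge] using hA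
  · simpa [hf.le_iff_ge] using hyB
  · simpa [hf.le_iff_ge] using hAx

theorem perm (h : RowInsertion r x y r') : (x :: r).Perm (y :: r') := by
  obtain ⟨A, B, rfl, rfl, -⟩ := h
  calc (x :: (A ++ y :: B)).Perm (x :: y :: (A ++ B)) := List.perm_middle.cons x
    _ |>.Perm (y :: x :: (A ++ B)) := .swap y x _
    _ |>.Perm (y :: (A ++ x :: B)) := (List.perm_middle.cons y).symm

theorem length_eq (h : RowInsertion r x y r') : r'.length = r.length := by
  simpa using h.perm.length_eq.symm

theorem sorted_result (h : RowInsertion r x y r') : r'.Pairwise (· ≤ ·) := by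
  obtain ⟨A, B, -, rfl, hA, hB, hAx, hxy, hyB⟩ := h
  rw [List.pairwise_append, List.pairwise_cons]
  refine ⟨hA, ⟨fun b hb => hxy.le.trans (hyB b hb), hB⟩, fun a ha => ?_⟩
  rw [List.forall_mem_cons]
  exact ⟨hAx a ha, fun b hb => (hAx a ha).trans (hxy.le.trans (hyB b hb))⟩

theorem result_unique (h : RowInsertion r x y r') (h' : RowInsertion r x y' q') :
    y = y' ∧ r' = q' := by
  obtain ⟨A, B, rfl, rfl, -, -, hAx, hxy, -⟩ := h
  obtain ⟨A', B', heq, rfl, -, -, hAx', hxy', -⟩ := h'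
  obtain ⟨rfl, rfl, rfl⟩ := append_cons_inj_of_forall heq hAx hAx' hxy.not_ge hxy'.not_ge
  exact ⟨rfl, rfl⟩

theorem source_unique (h : RowInsertion r x y r') (h' : RowInsertion q x' y r') :
    x = x' ∧ r = q := by
  simpa [toDual.injective.list_map.eq_iff] using (h.map_reverse strictAnti_toDual).result_unique
    (h'.map_reverse strictAnti_toDual)

theorem bumped_le_bumped (h : RowInsertion r x y r') (h' : RowInsertion r' x' y' q)
    (hx : x ≤ x') : y ≤ y' := by
  obtain ⟨A, B, rfl, rfl, -, -, hAx, hxy, hyB⟩ := h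
  obtain ⟨A', B', heq, -, -, -, -, hxy', -⟩ := h'
  have hmem : y' ∈ A ++ x :: B := by simp [heq]
  rcases List.mem_append.1 hmem with hA | hB
  · exact absurd ((hAx y' hA).trans hx) hxy'.not_ge
  rcases List.mem_cons.1 hB with rfl | hB
  · exact absurd hx hxy'.not_ge
  · exact hyB y' hB

theorem knuthEquiv {r r' : List ℕ} {x y : ℕ} (h : RowInsertion r x y r') :
    KnuthEquiv (r ++ [x]) (y :: r') := by
  obtain ⟨A, B, rfl, rfl, hA, hB, hAx, hxy, hyB⟩ := h
  have hx := (KnuthEquiv.move_to_second hxy (List.pairwise_cons.2 ⟨hyB, hB⟩)).append_left A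
  simpa using (hx.trans (KnuthEquiv.move_to_front hxy hA hAx))

end RowInsertion

/-- The row `xs` is inserted, letter by letter from the left, into the row `r`; the letters bumped
are `ys`, in this order, and the row ends up as `r'`. -/
inductive RowExchange : List α → List α → List α → List α → Prop
  | nil (r : List α) : RowExchange r [] [] r
  | cons {r s r' xs ys : List α} {x y : α} (h : RowInsertion r x y s)
      (hs : RowExchange s xs ys r') : RowExchange r (x :: xs) (y :: ys) r'

namespace RowExchange

variable {r r' q q' xs ys xs' ys' : List α} {x y : α}

theorem concat (h : RowExchange r xs ys r') (h' : RowInsertion r' x y q) :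
    RowExchange r (xs ++ [x]) (ys ++ [y]) q := by
  induction h with
  | nil r => exact .cons h' (.nil q)
  | cons h _ ih => exact .cons h (ih h')

theorem map_reverse {f : α → β} (hf : StrictAnti f) (h : RowExchange r xs ys r') :
    RowExchange (r'.reverse.map f) (ys.reverse.map f) (xs.reverse.map f) (r.reverse.map f) := by
  induction h with
  | nil r => exact .nil _
  | cons h _ ih => simpa using ih.concat (h.map_reverse hf)

theorem knuthEquiv {r r' xs ys : List ℕ} (h : RowExchange r xs ys r') :
    KnuthEquiv (r ++ xs) (ys ++ r') := by
  induction h with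
  | nil r => simpa using KnuthEquiv.refl r
  | @cons r s r' xs ys x y h _ ih =>
    have hinsert : KnuthEquiv (r ++ x :: xs) (y :: s ++ xs) := by
      simpa using h.knuthEquiv.append_right xs
    exact hinsert.trans (ih.append_left [y])

theorem perm (h : RowExchange r xs ys r') : (r ++ xs).Perm (ys ++ r') := by
  induction h with
  | nil _ => simp
  | cons h _ ih => exact List.perm_middle.trans ((h.perm.append_right _).trans (ih.cons _))

theorem length_bumped (h : RowExchange r xs ys r') : ys.length = xs.length := by
  induction h with
  | nil _ => rfl
  | cons _ _ ih => simp [ih]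

theorem length_row (h : RowExchange r xs ys r') : r'.length = r.length := by
  induction h with
  | nil _ => rfl
  | cons h _ ih => rw [ih, h.length_eq]

theorem result_unique (h : RowExchange r xs ys r') (h' : RowExchange r xs ys' q') :
    ys = ys' ∧ r' = q' := by
  induction h generalizing ys' with
  | nil _ => cases h'; exact ⟨rfl, rfl⟩
  | cons h _ ih =>
    cases h' with
    | cons h' hs' =>
      obtain ⟨rfl, rfl⟩ := h.result_unique h'
      obtain ⟨rfl, rfl⟩ := ih hs'
      exact ⟨rfl, rfl⟩

theorem source_unique (h : RowExchange r xs ys r') (h' : RowExchange q xs' ys r') :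
    r = q ∧ xs = xs' := by
  simpa [and_comm, toDual.injective.list_map.eq_iff] using
    (h.map_reverse strictAnti_toDual).result_unique
    (h'.map_reverse strictAnti_toDual)

theorem sorted_row (h : RowExchange r xs ys r') (hr : r.Pairwise (· ≤ ·)) :
    r'.Pairwise (· ≤ ·) := by
  induction h with
  | nil _ => exact hr
  | cons h _ ih => exact ih h.sorted_result

theorem sorted_bumped (h : RowExchange r xs ys r') (hxs : xs.Pairwise (· ≤ ·)) :
    ys.Pairwise (· ≤ ·) := by
  simp only [← List.isChain_iff_pairwise] at hxs ⊢
  induction h with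
  | nil => exact hxs
  | cons h hs ih =>
    cases hs with
    | nil _ => exact .singleton _
    | cons h' hs' =>
      obtain ⟨hx, hxs⟩ := List.isChain_cons_cons.1 hxs
      exact List.isChain_cons_cons.2 ⟨h.bumped_le_bumped h' hx, ih hxs⟩

theorem sorted_inserted (h : RowExchange r xs ys r') (hys : ys.Pairwise (· ≤ ·)) :
    xs.Pairwise (· ≤ ·) := by
  have hdual := (h.map_reverse strictAnti_toDual).sorted_bumped
    (by simpa [List.pairwise_map, List.pairwise_reverse] using hys)
  simpa [List.pairwise_map, List.pairwise_reverse] using hdual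

theorem sorted_source (h : RowExchange r xs ys r') (hr' : r'.Pairwise (· ≤ ·)) :
    r.Pairwise (· ≤ ·) := by
  have hdual := (h.map_reverse strictAnti_toDual).sorted_row
    (by simpa [List.pairwise_map, List.pairwise_reverse] using hr')
  simpa [List.pairwise_map, List.pairwise_reverse] using hdual

theorem exists_of_forall₂ {p q xs : List α} (hr : (p ++ q).Pairwise (· ≤ ·))
    (h : List.Forall₂ (· < ·) xs q) : ∃ ys r', RowExchange (p ++ q) xs ys r' := by
  induction h generalizing p with
  | nil => exact ⟨[], _, .nil _⟩
  | @cons x b xs q hxb _ ih =>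
    obtain ⟨A, y, B, hsplit, hAx, hxy⟩ :
        ∃ A y B, p ++ [b] = A ++ y :: B ∧ (∀ a ∈ A, a ≤ x) ∧ x < y := by
      obtain ⟨y, A, B, hA, hy, hsplit, -⟩ :=
        List.exists_of_eraseP (p := fun c => x < c) (l := p ++ [b]) (a := b) (by simp) (by simpa)
      exact ⟨A, y, B, hsplit, by simpa using hA, by simpa using hy⟩
    rw [List.append_cons, hsplit] at hr ⊢
    rw [List.append_assoc, List.pairwise_append, List.cons_append, List.pairwise_cons] at hr
    obtain ⟨hA, ⟨hyB, hB⟩, -⟩ := hr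
    have hins : RowInsertion (A ++ y :: B ++ q) x y (A ++ x :: B ++ q) :=
      ⟨A, B ++ q, by simp, by simp, hA, hB, hAx, hxy, hyB⟩
    obtain ⟨ys, r', h⟩ := ih hins.sorted_result
    exact ⟨y :: ys, r', .cons hins h⟩

theorem exists_of_forall₂_reverse {p q ys : List α} (hr : (p ++ q).Pairwise (· ≤ ·))
    (h : List.Forall₂ (· < ·) p ys) : ∃ r xs, RowExchange r xs ys (p ++ q) := by
  have hsorted : (q.reverse.map toDual ++ p.reverse.map toDual).Pairwise (· ≤ ·) := by
    simpa [← List.map_append, ← List.reverse_append, List.pairwise_map, List.pairwise_reverse]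
      using hr
  have hlt : List.Forall₂ (· < ·) (ys.reverse.map toDual) (p.reverse.map toDual) := by
    rw [List.forall₂_map_left_iff, List.forall₂_map_right_iff, List.forall₂_reverse_iff]
    exact h.flip
  obtain ⟨xs, r, hdual⟩ := exists_of_forall₂ hsorted hlt
  exact ⟨_, _, by simpa [Function.comp_def] using hdual.map_reverse strictAnti_ofDual⟩

end RowExchange

end RowInsertion

/-! ### The decreasing rearrangement of a composition -/

section Dsort

variable {n : ℕ} {α : ℕ → ℕ}

/-- The number of parts `≥ m` of the composition `(α 0, …, α (n - 1))`, that is, the length of the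
`m`-th column of its decreasing rearrangement. -/
def numPartsGE (n : ℕ) (α : ℕ → ℕ) (m : ℕ) : ℕ := ((Finset.range n).filter (m ≤ α ·)).card

theorem numPartsGE_antitone : Antitone (numPartsGE n α) := fun _ _ hm =>
  Finset.card_le_card (Finset.monotone_filter_right _ fun _ _ => hm.trans)

theorem numPartsGE_eq_zero {m : ℕ} (hm : ∀ k < n, α k < m) : numPartsGE n α m = 0 := by
  simpa [numPartsGE, Finset.filter_eq_empty_iff] using hm

theorem numPartsGE_comp_perm {σ : Equiv.Perm ℕ} (hσ : ∀ k, σ k < n ↔ k < n) (m : ℕ) :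
    numPartsGE n (α ∘ σ) m = numPartsGE n α m :=
  Finset.card_equiv σ fun k => by simp [hσ]

theorem dsort_eq_sSup (n : ℕ) (α : ℕ → ℕ) (i : ℕ) :
    dsort n α i = sSup {m | i < numPartsGE n α m} := by
  unfold dsort numPartsGE
  congr!

theorem le_dsort_iff {i m : ℕ} (hm : 0 < m) : m ≤ dsort n α i ↔ i < numPartsGE n α m := by
  have hbdd : BddAbove {m | i < numPartsGE n α m} := by
    refine ⟨(Finset.range n).sup α, fun m' (hm' : i < _) => ?_⟩
    by_contra! hlt
    rw [numPartsGE_eq_zero fun k hk =>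
      (Finset.le_sup (f := α) (Finset.mem_range.2 hk)).trans_lt hlt] at hm'
    exact Nat.not_lt_zero _ hm'
  rw [dsort_eq_sSup]
  refine ⟨fun h => ?_, fun h => le_csSup hbdd h⟩
  have hne : {m | i < numPartsGE n α m}.Nonempty := by
    by_contra hempty
    rw [Set.not_nonempty_iff_eq_empty.1 hempty, csSup_empty] at h
    exact (hm.trans_le h).ne rfl
  exact (Nat.sSup_mem hne hbdd).trans_le (numPartsGE_antitone h)

theorem dsort_comp_perm {σ : Equiv.Perm ℕ} (hσ : ∀ k, σ k < n ↔ k < n) :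
    dsort n (α ∘ σ) = dsort n α := by
  funext i
  simp only [dsort_eq_sSup, numPartsGE_comp_perm hσ]

theorem dsort_le_sup (i : ℕ) : dsort n α i ≤ (Finset.range n).sup α := by
  by_contra! hlt
  have := (le_dsort_iff (Nat.succ_pos _)).1 hlt
  rw [numPartsGE_eq_zero fun k hk =>
    Nat.lt_succ_of_le (Finset.le_sup (f := α) (Finset.mem_range.2 hk))] at this
  exact Nat.not_lt_zero _ this

theorem sum_eq_sum_card_lt {ι : Type*} {s : Finset ι} {f : ι → ℕ} {N : ℕ}
    (hf : ∀ x ∈ s, f x ≤ N) :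
    ∑ x ∈ s, f x = ∑ m ∈ Finset.range N, (s.filter (m < f ·)).card := by
  refine (Finset.sum_congr rfl fun x hx => ?_).trans
    (Finset.sum_card_bipartiteAbove_eq_sum_card_bipartiteBelow fun x m => m < f x)
  have hrange : (Finset.range N).filter (· < f x) = Finset.range (f x) := by
    ext m
    grind
  rw [Finset.bipartiteAbove, hrange, Finset.card_range]

theorem sum_dsort_le_sum {S : Finset ℕ} (hS : S ⊆ Finset.range n)
    (h : ∀ j ∈ S, ∀ k < n, k ∉ S → α k ≤ α j) :
    ∑ r ∈ Finset.range S.card, dsort n α r ≤ ∑ j ∈ S, α j := by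
  rw [sum_eq_sum_card_lt (N := (Finset.range n).sup α) fun r _ => dsort_le_sup r,
    sum_eq_sum_card_lt fun j hj => Finset.le_sup (hS hj)]
  refine Finset.sum_le_sum fun m _ => ?_
  by_cases hall : ∀ j ∈ S, m < α j
  · rw [Finset.filter_true_of_mem hall]
    exact (Finset.card_filter_le _ _).trans (Finset.card_range _).le
  push Not at hall
  obtain ⟨j, hj, hjm⟩ := hall
  calc ((Finset.range S.card).filter (m < dsort n α ·)).card
      ≤ (Finset.range (numPartsGE n α (m + 1))).card := Finset.card_le_card fun r hr =>
        Finset.mem_range.2 ((le_dsort_iff m.succ_pos).1 (Finset.mem_filter.1 hr).2)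
    _ = numPartsGE n α (m + 1) := Finset.card_range _
    _ ≤ (S.filter (m < α ·)).card := Finset.card_le_card fun k hk => by
        obtain ⟨hkn, hk⟩ := Finset.mem_filter.1 hk
        refine Finset.mem_filter.2 ⟨?_, hk⟩
        by_contra hkS
        exact (hk.trans (h j hj k (Finset.mem_range.1 hkn) hkS)).not_gt (Nat.lt_succ_of_le hjm)

theorem card_nonzero_le_of_sum_le_sum_dsort {k : ℕ}
    (h : ∑ j ∈ Finset.range n, α j ≤ ∑ r ∈ Finset.range k, dsort n α r) :
    ((Finset.range n).filter (α · ≠ 0)).card ≤ k := by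
  by_contra! hlt
  set Z := (Finset.range n).filter (α · ≠ 0) with hZ
  obtain ⟨j₀, hj₀, hmin⟩ := Finset.exists_min_image Z α (Finset.card_pos.1 (by omega))
  have htop : ∑ r ∈ Finset.range (Z.erase j₀).card, dsort n α r ≤ ∑ j ∈ Z.erase j₀, α j := by
    refine sum_dsort_le_sum ((Finset.erase_subset _ _).trans (Finset.filter_subset _ _)) ?_
    intro j hj j' hj' hj'Z
    rcases eq_or_ne j' j₀ with rfl | hne
    · exact hmin j (Finset.mem_of_mem_erase hj)
    · have hzero : α j' = 0 := by simp_all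
      exact hzero.trans_le (Nat.zero_le _)
  have hk : ∑ r ∈ Finset.range k, dsort n α r ≤
      ∑ r ∈ Finset.range (Z.erase j₀).card, dsort n α r := by
    refine Finset.sum_le_sum_of_subset (Finset.range_mono ?_)
    rw [Finset.card_erase_of_mem hj₀]
    omega
  have hsplit : α j₀ + ∑ j ∈ Z.erase j₀, α j = ∑ j ∈ Finset.range n, α j := by
    rw [Finset.add_sum_erase Z α hj₀, hZ, Finset.sum_filter_ne_zero]
  have hpos : α j₀ ≠ 0 := (Finset.mem_filter.1 hj₀).2
  omega

end Dsort

/-! ### Key factorizations -/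

/-- The Greene invariants of `w` are the partial sums of the partition `sh`: `w` inserts to a
tableau of shape `sh`. -/
def HasGreeneShape (sh : ℕ → ℕ) (w : List ℕ) : Prop :=
  (∀ (S : Finset ℕ) (m : ℕ), IncColorable S m w → m ≤ ∑ r ∈ Finset.range S.card, sh r) ∧
    ∀ k, IncColorable (Finset.range k) (∑ r ∈ Finset.range k, sh r) w

namespace HasGreeneShape

variable {sh sh' : ℕ → ℕ} {w w' : List ℕ}

theorem of_knuthEquiv (h : HasGreeneShape sh w) (hw : KnuthEquiv w w') : HasGreeneShape sh w' :=
  ⟨fun S m hm => h.1 S m ((incColorable_iff_of_knuthEquiv hw).2 hm),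
    fun k => (incColorable_iff_of_knuthEquiv hw).1 (h.2 k)⟩

theorem readingWordOn {s : Finset Cell} {T : Cell → ℕ} (hs : IsPartitionShape s)
    (hT : IsSSYTOn s T) : HasGreeneShape (rowLenOf s) (readingWordOn s T) :=
  ⟨fun _ _ => le_sum_rowLenOf_of_incColorable hs hT, incColorable_readingWordOn hs hT⟩

theorem sum_le_sum (h : HasGreeneShape sh w) (h' : HasGreeneShape sh' w) (k : ℕ) :
    ∑ r ∈ Finset.range k, sh' r ≤ ∑ r ∈ Finset.range k, sh r := by
  simpa using h.1 _ _ (h'.2 k)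

theorem unique (h : HasGreeneShape sh w) (h' : HasGreeneShape sh' w) : sh = sh' := by
  have hsum (k : ℕ) := (h'.sum_le_sum h k).antisymm (h.sum_le_sum h' k)
  funext r
  simpa [Finset.sum_range_succ, hsum r] using hsum (r + 1)

end HasGreeneShape

theorem BurgeData.rowLenOf_eq_iff (B : BurgeData) {top w : List ℕ} (h : IsBiword top w)
    {sh : ℕ → ℕ} : (∀ r, rowLenOf (B.out top w).sh r = sh r) ↔ HasGreeneShape sh w := by
  have hw : HasGreeneShape (rowLenOf (B.out top w).sh) w :=
    (HasGreeneShape.readingWordOn (B.shape_part _ _ h) (B.ssytP _ _ h)).of_knuthEquiv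
      (B.knuthP _ _ h)
  exact ⟨fun hsh => funext hsh ▸ hw, fun hsh r => congrFun (hw.unique hsh) r⟩

section Rows

variable {n : ℕ} {κ : Type*} [DecidableEq κ] {v : ℕ → List ℕ}

theorem pairwise_flatten_rows {τ : Type*} {R : τ → τ → Prop} {V : ℕ → List τ}
    (hrow : ∀ j < n, (V j).Pairwise R)
    (hrows : ∀ j' j, j' < j → j < n → ∀ a ∈ V j, ∀ b ∈ V j', R a b) :
    ((List.range n).reverse.map V).flatten.Pairwise R := by
  simp only [List.pairwise_flatten, List.forall_mem_map, List.mem_reverse, List.mem_range,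
    List.pairwise_map, List.pairwise_reverse]
  exact ⟨hrow, List.pairwise_lt_range.imp_of_mem fun _ hj hlt =>
    hrows _ _ hlt (List.mem_range.1 hj)⟩

theorem incColorable_wordOfFactors {S : Finset κ} {V : ℕ → List (ℕ × κ)}
    (hV : ∀ j < n, (V j).map Prod.fst = v j) (hv : ∀ j < n, (v j).Pairwise (· ≤ ·))
    (hrows : ∀ j' j, j' < j → j < n → ∀ a ∈ V j, ∀ b ∈ V j', SameColorLE S a b) :
    IncColorable S (∑ j ∈ Finset.range n, (V j).countP (fun a => a.2 ∈ S))
      (wordOfFactors n v) := by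
  refine ⟨((List.range n).reverse.map V).flatten, ?_, pairwise_flatten_rows ?_ hrows, ?_⟩
  · rw [wordOfFactors, List.map_flatten, List.map_map]
    congr 1
    exact List.map_congr_left fun j hj => hV j (by simpa using hj)
  · intro j hj
    have hsorted := hv j hj
    rw [← hV j hj, List.pairwise_map] at hsorted
    exact hsorted.imp fun hle _ _ => hle
  · rw [List.countP_flatten, List.map_map, ((List.reverse_perm _).map _).sum_eq]
    exact le_rfl

theorem countP_map_prodMk {τ : Type*} {S : Finset κ} (l : List τ) (c : κ) :
    (l.map (·, c)).countP (fun a => a.2 ∈ S) = if c ∈ S then l.length else 0 := by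
  split_ifs with hc <;> simp [List.countP_map, Function.comp_def, hc]

/-- The rows of `v`, row `j` in colour `j`, except that the first `a` letters of row `i` and the
letters of row `i'` from position `b` on form colour `i`, and the remaining letters of these two
rows form colour `i'`. -/
def mergedColoring (v : ℕ → List ℕ) (i i' a b j : ℕ) : List (ℕ × ℕ) :=
  if j = i then ((v i).take a).map (·, i) ++ ((v i).drop a).map (·, i')
  else if j = i' then ((v i').take b).map (·, i') ++ ((v i').drop b).map (·, i)
  else (v j).map (·, j)

variable {i i' a b : ℕ} {T : Finset ℕ}

theorem map_fst_mergedColoring (v : ℕ → List ℕ) (i i' a b j : ℕ) :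
    (mergedColoring v i i' a b j).map Prod.fst = v j := by
  simp only [mergedColoring]
  split_ifs <;> simp_all [Function.comp_def]

theorem mergedColoring_sameColorLE (hii : i' < i) (hiT' : i' ∉ T)
    (hab : ∀ x ∈ (v i).take a, ∀ y ∈ (v i').drop b, x ≤ y) {j j' : ℕ} (hj : j' < j) :
    ∀ x ∈ mergedColoring v i i' a b j, ∀ y ∈ mergedColoring v i i' a b j',
      SameColorLE (insert i T) x y := by
  have hcolor {k : ℕ} {x : ℕ × ℕ} (hx : x ∈ mergedColoring v i i' a b k)
      (hxT : x.2 ∈ insert i T) :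
      (k = i ∧ x.2 = i ∧ x.1 ∈ (v i).take a) ∨ (k = i' ∧ x.2 = i ∧ x.1 ∈ (v i').drop b) ∨
        (k ≠ i ∧ k ≠ i' ∧ x.2 = k) := by
    have : i' ∉ insert i T := by grind
    simp only [mergedColoring] at hx
    split_ifs at hx
    all_goals simp only [List.mem_append, List.mem_map] at hx
    all_goals grind
  intro x hx y hy hxT hxy
  have hx' := hcolor hx hxT
  have hy' := hcolor hy (hxy ▸ hxT)
  grind

theorem sum_countP_mergedColoring (hii : i' < i) (hiT : i ∉ T) (hiT' : i' ∉ T) :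
    ∑ j ∈ insert i (insert i' T),
        (mergedColoring v i i' a b j).countP (fun x => x.2 ∈ insert i T) =
      ((v i).take a).length + ((v i').drop b).length + ∑ j ∈ T, (v j).length := by
  have hi'T : i' ∉ insert i T := by grind
  have hcount_T : ∀ j ∈ T, (mergedColoring v i i' a b j).countP (fun x => x.2 ∈ insert i T) =
      (v j).length := fun j hj => by
    rw [mergedColoring, if_neg (ne_of_mem_of_not_mem hj hiT),
      if_neg (ne_of_mem_of_not_mem hj hiT'), countP_map_prodMk,
      if_pos (Finset.mem_insert_of_mem hj)]
  rw [Finset.sum_insert (by grind), Finset.sum_insert hiT', Finset.sum_congr rfl hcount_T,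
    ← add_assoc]
  simp only [mergedColoring, hii.ne, List.countP_append, countP_map_prodMk,
    Finset.mem_insert_self, hi'T, if_true, if_false, add_zero, zero_add]

theorem incColorable_merge_rows (hv : ∀ j < n, (v j).Pairwise (· ≤ ·)) (hii : i' < i) (hi : i < n)
    (hab : ∀ x ∈ (v i).take a, ∀ y ∈ (v i').drop b, x ≤ y) (hT : T ⊆ Finset.range n)
    (hiT : i ∉ T) (hiT' : i' ∉ T) :
    IncColorable (insert i T)
      (((v i).take a).length + ((v i').drop b).length + ∑ j ∈ T, (v j).length)
      (wordOfFactors n v) := by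
  rw [← sum_countP_mergedColoring hii hiT hiT']
  exact (incColorable_wordOfFactors (fun j _ => map_fst_mergedColoring v i i' a b j) hv
    fun _ _ hj _ => mergedColoring_sameColorLE hii hiT' hab hj).mono
      (Finset.sum_le_sum_of_subset (by grind))

end Rows

theorem isBiword_bwordComp {n : ℕ} {α : ℕ → ℕ} {v : ℕ → List ℕ} (hlen : ∀ i, (v i).length = α i)
    (hv : ∀ i, (v i).Pairwise (· ≤ ·)) (hpos : ∀ i, ∀ x ∈ v i, 1 ≤ x) :
    IsBiword (bwordComp n α) (wordOfFactors n v) := by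
  let L : List (ℕ × ℕ) := ((List.range n).reverse.map fun j => (v j).map (j + 1, ·)).flatten
  have htop : bwordComp n α = L.map Prod.fst := by
    simp [L, bwordComp, List.map_flatten, Function.comp_def, hlen]
  have hbot : wordOfFactors n v = L.map Prod.snd := by
    simp [L, wordOfFactors, List.map_flatten, Function.comp_def]
  have hL : L.Pairwise fun a b => b.1 ≤ a.1 ∧ (b.2 < a.2 → b.1 < a.1) := by
    refine pairwise_flatten_rows (fun j _ => ?_) fun j' j hj _ => ?_
    · exact List.pairwise_map.2 ((hv j).imp fun hle => ⟨le_rfl, fun hlt => absurd hle hlt.not_ge⟩)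
    · simp only [List.forall_mem_map]
      intros
      omega
  have hmem : ∀ p ∈ L, 1 ≤ p.1 ∧ 1 ≤ p.2 := by
    simp only [L, List.mem_flatten, List.mem_map]
    rintro p ⟨_, ⟨j, -, rfl⟩, hp⟩
    obtain ⟨x, hx, rfl⟩ := List.mem_map.1 hp
    exact ⟨Nat.succ_pos j, hpos j x hx⟩
  rw [htop, hbot]
  refine ⟨by simp, List.forall_mem_map.2 fun p hp => (hmem p hp).1,
    List.forall_mem_map.2 fun p hp => (hmem p hp).2, fun p hp => ?_⟩
  rw [List.length_map] at hp
  have hadj := List.pairwise_iff_getElem.1 hL p (p + 1) (by omega) hp (by omega)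
  simpa [List.getD_eq_getElem?_getD, hp, Nat.lt_of_succ_lt hp] using hadj

theorem count_bwordComp (n : ℕ) (α : ℕ → ℕ) (u : ℕ) :
    (bwordComp n α).count u = if 1 ≤ u ∧ u ≤ n then α (u - 1) else 0 := by
  induction n with
  | zero => grind [bwordComp]
  | succ n ih =>
    have hsucc : bwordComp (n + 1) α = List.replicate (α n) (n + 1) ++ bwordComp n α := by
      simp [bwordComp, List.range_succ]
    rw [hsucc, List.count_append, ih, List.count_replicate]
    grind

/-- `v` lists, from the last to the first, the factors of lengths `α i` of a word whose Burge
recording tableau is `key(α)`. -/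
structure IsKeyFactorization (n : ℕ) (α : ℕ → ℕ) (v : ℕ → List ℕ) : Prop where
  eq_nil : ∀ i, n ≤ i → v i = []
  length_eq : ∀ i, (v i).length = α i
  sorted : ∀ i, (v i).Pairwise (· ≤ ·)
  pos : ∀ i, ∀ x ∈ v i, 1 ≤ x
  hasGreeneShape : HasGreeneShape (dsort n α) (wordOfFactors n v)

namespace IsKeyFactorization

variable {n : ℕ} {α : ℕ → ℕ} {v : ℕ → List ℕ}

theorem getElem_lt (hv : IsKeyFactorization n α v) {i i' p q : ℕ} (hii : i' < i) (hi : i < n)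
    (hp : p < (v i).length) (hq : q < (v i').length)
    (hpq : max (α i) (α i') ≤ p + (α i' - q)) : (v i')[q] < (v i)[p] := by
  by_contra! hle
  have hab : ∀ x ∈ (v i).take (p + 1), ∀ y ∈ (v i').drop q, x ≤ y := by
    intro x hx y hy
    obtain ⟨k, hk, rfl⟩ := List.mem_iff_getElem.1 hx
    obtain ⟨l, hl, rfl⟩ := List.mem_iff_getElem.1 hy
    rw [List.getElem_take, List.getElem_drop]
    have hk' : k ≤ p := by grind
    exact ((hv.sorted i).rel_get_of_le (a := ⟨k, by omega⟩) (b := ⟨p, hp⟩) hk').trans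
      (hle.trans ((hv.sorted i').rel_get_of_le (a := ⟨q, hq⟩) (b := ⟨q + l, by grind⟩)
        (Nat.le_add_right q l)))
  set T := (Finset.range n).filter fun j => j ≠ i ∧ j ≠ i' ∧ max (α i) (α i') ≤ α j with hT
  obtain ⟨m, hm, hαm⟩ : ∃ m, (m = i ∨ m = i') ∧ α m = max (α i) (α i') := by grind
  have hlower := hv.hasGreeneShape.1 _ _ (incColorable_merge_rows (fun j _ => hv.sorted j) hii hi
    hab (T := T) (Finset.filter_subset _ _) (by simp [hT]) (by simp [hT]))
  have hupper : ∑ r ∈ Finset.range (insert m T).card, dsort n α r ≤ ∑ j ∈ insert m T, α j := by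
    refine sum_dsort_le_sum (by grind) fun j hj k hk hkT => ?_
    grind
  rw [Finset.card_insert_of_notMem (by simp [hT])] at hlower
  rw [Finset.card_insert_of_notMem (by grind), Finset.sum_insert (by grind), hαm] at hupper
  simp only [List.length_take, List.length_drop, hv.length_eq] at hlower hp hq
  omega

theorem forall₂_drop (hv : IsKeyFactorization n α v) {i i' : ℕ} (hii : i' < i) (hi : i < n)
    (hα : α i' ≤ α i) : List.Forall₂ (· < ·) (v i') ((v i).drop (α i - α i')) := by
  have hlen := hv.length_eq
  refine List.forall₂_iff_get.2 ⟨by simp [hlen, Nat.sub_sub_self hα], fun q hq _ => ?_⟩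
  simp only [List.get_eq_getElem, List.getElem_drop]
  exact hv.getElem_lt hii hi _ hq (by grind)

theorem forall₂_take (hv : IsKeyFactorization n α v) {i i' : ℕ} (hii : i' < i) (hi : i < n)
    (hα : α i ≤ α i') : List.Forall₂ (· < ·) ((v i').take (α i)) (v i) := by
  have hlen := hv.length_eq
  refine List.forall₂_iff_get.2 ⟨by simp [hlen, hα], fun q hq hq' => ?_⟩
  simp only [List.get_eq_getElem, List.getElem_take]
  exact hv.getElem_lt hii hi hq' _ (by grind)

theorem card_nonzero_rows_le (hv : IsKeyFactorization n α v) {i K : ℕ} (hi : i < n)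
    (hK : ∀ j ≤ i, ∀ x ∈ v j, x ≤ K) :
    ((Finset.range (i + 1)).filter (α · ≠ 0)).card ≤ K := by
  set T := (Finset.Ico (i + 1) n).filter (α · ≠ 0)
  let V (j : ℕ) : List (ℕ × ℕ) := (v j).map fun x => (x, if j ≤ i then n + x else j)
  set S := Finset.Icc (n + 1) (n + K) ∪ T
  have hcolor : ∀ j < n, (V j).countP (fun a => a.2 ∈ S) = α j := fun j hj => by
    rw [← hv.length_eq j, List.countP_map, List.countP_eq_length]
    intro x hx
    have hpos := hv.pos j x hx
    have hne : α j ≠ 0 := by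
      rw [← hv.length_eq j]
      exact (List.length_pos_of_mem hx).ne'
    have hxK := fun hji => hK j hji x hx
    grind
  have hinc : IncColorable S (∑ j ∈ Finset.range n, α j) (wordOfFactors n v) := by
    rw [← Finset.sum_congr rfl fun j hj => hcolor j (Finset.mem_range.1 hj)]
    refine incColorable_wordOfFactors (fun j _ => by simp [V, Function.comp_def])
      (fun j _ => hv.sorted j) fun j' j hjj' hj => ?_
    simp only [V, List.forall_mem_map]
    rintro x _ y _ - hxy
    grind
  have hcard := card_nonzero_le_of_sum_le_sum_dsort (hv.hasGreeneShape.1 S _ hinc)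
  have hScard : S.card ≤ K + T.card := by
    simpa using Finset.card_union_le (Finset.Icc (n + 1) (n + K)) T
  have hsplit : ((Finset.range n).filter (α · ≠ 0)).card =
      ((Finset.range (i + 1)).filter (α · ≠ 0)).card + T.card := by
    rw [← Finset.card_union_of_disjoint, ← Finset.filter_union]
    · congr 2
      grind
    · exact Finset.disjoint_filter_filter (by grind [Finset.disjoint_left])
  omega

end IsKeyFactorization

/-! ### Knuth bijections between flagged factorizations -/

/-- The set `𝒲(α, Φ)`, with the Burge correspondence eliminated from its definition. -/
def flaggedFactorizations (n : ℕ) (α Φ : ℕ → ℕ) : Set (ℕ → List ℕ) :=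
  {v | IsKeyFactorization n α v ∧ ∀ i, ∀ x ∈ v i, x ≤ Φ i}

theorem IsKeyFactorization.headI_lt_getLastD {n : ℕ} {α : ℕ → ℕ} {v : ℕ → List ℕ}
    (hv : IsKeyFactorization n α v) {i i' : ℕ} (hii : i' < i) (hne : v i ≠ []) (hne' : v i' ≠ []) :
    (v i').headI < (v i).getLastD 0 := by
  have hi : i < n := by
    by_contra! hle
    exact hne (hv.eq_nil i hle)
  have hpos := List.length_pos_iff.2 hne
  have hpos' := List.length_pos_iff.2 hne'
  have hlt := hv.getElem_lt hii hi (p := (v i).length - 1) (q := 0) (by omega) hpos' (by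
    simp only [hv.length_eq] at *
    omega)
  obtain ⟨x, l, hx⟩ := List.exists_cons_of_ne_nil hne'
  simp only [hx, List.getElem_cons_zero] at hlt
  rwa [hx, List.headI_cons, List.getLastD_eq_getLast?, List.getLast?_eq_some_getLast hne,
    Option.getD_some, List.getLast_eq_getElem]

theorem WSet_eq_flaggedFactorizations (n : ℕ) (B : BurgeData) (α Φ : ℕ → ℕ) :
    WSet n B α Φ = flaggedFactorizations n α Φ := by
  ext v
  constructor
  · rintro ⟨hnil, hlen, hchain, hletter, -, hshape, -⟩
    have hsorted i : (v i).Pairwise (· ≤ ·) := List.isChain_iff_pairwise.1 (hchain i)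
    have hpos : ∀ i, ∀ x ∈ v i, 1 ≤ x := fun i x hx => (hletter i x hx).1
    exact ⟨⟨hnil, hlen, hsorted, hpos,
      (B.rowLenOf_eq_iff (isBiword_bwordComp hlen hsorted hpos)).1 hshape⟩,
      fun i x hx => (hletter i x hx).2⟩
  · rintro ⟨hv, hflag⟩
    have hbiword := isBiword_bwordComp (n := n) hv.length_eq hv.sorted hv.pos
    refine ⟨hv.eq_nil, hv.length_eq, fun i => List.isChain_iff_pairwise.2 (hv.sorted i),
      fun i x hx => ⟨hv.pos i x hx, hflag i x hx⟩,
      fun i i' hii hne hne' _ => hv.headI_lt_getLastD hii hne hne',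
      (B.rowLenOf_eq_iff hbiword).2 hv.hasGreeneShape, fun u => ?_⟩
    rw [B.contentQ _ _ hbiword]
    convert count_bwordComp n α u

/-- There is a bijection from `X` to `Y`, two sets of factorizations, that preserves the plactic
class of the factored word. -/
def KnuthBijective (n : ℕ) (X Y : Set (ℕ → List ℕ)) : Prop :=
  ∃ ζ : (ℕ → List ℕ) → (ℕ → List ℕ), Set.BijOn ζ X Y ∧
    ∀ v ∈ X, KnuthEquiv (wordOfFactors n v) (wordOfFactors n (ζ v))

theorem exists_bijOn_of_biUnique {ι κ : Type*} [Nonempty κ] {R : ι → κ → Prop}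
    (hR : Relator.BiUnique R) {X : Set ι} {Y : Set κ} (hX : ∀ x ∈ X, ∃ y ∈ Y, R x y)
    (hY : ∀ y ∈ Y, ∃ x ∈ X, R x y) : ∃ f : ι → κ, Set.BijOn f X Y ∧ ∀ x ∈ X, R x (f x) := by
  choose! f hf hRf using hX
  refine ⟨f, ⟨hf, fun x hx x' hx' hxx' => hR.1 (hRf x hx) (hxx' ▸ hRf x' hx'), fun y hy => ?_⟩, hRf⟩
  obtain ⟨x, hx, hxy⟩ := hY y hy
  exact ⟨x, hx, hR.2 (hRf x hx) hxy⟩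

namespace KnuthBijective

variable {n : ℕ} {X Y Z : Set (ℕ → List ℕ)}

theorem refl (n : ℕ) (X : Set (ℕ → List ℕ)) : KnuthBijective n X X :=
  ⟨id, Set.bijOn_id X, fun _ _ => KnuthEquiv.refl _⟩

theorem symm (h : KnuthBijective n X Y) : KnuthBijective n Y X := by
  obtain ⟨ζ, hζ, hknuth⟩ := h
  have hinv := hζ.invOn_invFunOn
  have hmaps := (hζ.symm hinv.symm).mapsTo
  refine ⟨_, hζ.symm hinv.symm, fun w hw => ?_⟩
  simpa only [hinv.2 hw] using (hknuth _ (hmaps hw)).symm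

theorem trans (h : KnuthBijective n X Y) (h' : KnuthBijective n Y Z) : KnuthBijective n X Z := by
  obtain ⟨ζ, hζ, hknuth⟩ := h
  obtain ⟨ξ, hξ, hknuth'⟩ := h'
  exact ⟨ξ ∘ ζ, hξ.comp hζ, fun v hv => (hknuth v hv).trans (hknuth' _ (hζ.mapsTo hv))⟩

theorem nonempty (h : KnuthBijective n X Y) (hX : X.Nonempty) : Y.Nonempty := by
  obtain ⟨ζ, hζ, -⟩ := h
  exact hζ.image_eq ▸ hX.image ζ

end KnuthBijective

/-- `w` arises from `v` by inserting the letters of `v i` into the row `v (i + 1)`, which becomes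
`w i`; the bumped letters form `w (i + 1)`. -/
def ExchangesRows (i : ℕ) (v w : ℕ → List ℕ) : Prop :=
  (∀ j, j ≠ i → j ≠ i + 1 → w j = v j) ∧ RowExchange (v (i + 1)) (v i) (w (i + 1)) (w i)

theorem wordOfFactors_succ (n : ℕ) (v : ℕ → List ℕ) :
    wordOfFactors (n + 1) v = v n ++ wordOfFactors n v := by
  simp [wordOfFactors, List.range_succ]

theorem wordOfFactors_congr {n : ℕ} {v w : ℕ → List ℕ} (h : ∀ j < n, w j = v j) :
    wordOfFactors n w = wordOfFactors n v := by
  rw [wordOfFactors, List.map_congr_left fun j hj => h j (by simpa using hj), ← wordOfFactors]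

theorem exists_row_update {i : ℕ} (v : ℕ → List ℕ) (a b : List ℕ) :
    ∃ w : ℕ → List ℕ, (∀ j, j ≠ i → j ≠ i + 1 → w j = v j) ∧ w i = a ∧ w (i + 1) = b :=
  ⟨Function.update (Function.update v i a) (i + 1) b, by grind, by grind, by grind⟩

namespace ExchangesRows

variable {n i : ℕ} {α Φ : ℕ → ℕ} {v w : ℕ → List ℕ}

theorem biUnique (i : ℕ) : Relator.BiUnique (ExchangesRows i) := by
  constructor
  · rintro v w u ⟨hvu, hrows⟩ ⟨hwu, hrows'⟩
    have := hrows.source_unique hrows'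
    funext j
    grind
  · rintro v w u ⟨hvw, hrows⟩ ⟨hvu, hrows'⟩
    have := hrows.result_unique hrows'
    funext j
    grind

theorem knuthEquiv (h : ExchangesRows i v w) (hi : i + 1 < n) :
    KnuthEquiv (wordOfFactors n v) (wordOfFactors n w) := by
  induction n, hi using Nat.le_induction with
  | base =>
    simp only [wordOfFactors_succ, ← List.append_assoc,
      wordOfFactors_congr fun j (hj : j < i) => h.1 j (by omega) (by omega)]
    exact h.2.knuthEquiv.append_right _
  | succ n hn ih =>
    rw [wordOfFactors_succ, wordOfFactors_succ, h.1 n (by omega) (by omega)]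
    exact ih.append_left _

theorem forall_row_iff (h : ExchangesRows i v w) {P P' : ℕ → List ℕ → Prop}
    (hP : ∀ j, j ≠ i → j ≠ i + 1 → ∀ l, P j l ↔ P' j l)
    (hrows : P (i + 1) (v (i + 1)) ∧ P i (v i) ↔ P' (i + 1) (w (i + 1)) ∧ P' i (w i)) :
    (∀ j, P j (v j)) ↔ ∀ j, P' j (w j) := by
  have hoff := h.1
  constructor <;> intro hall j <;> have hi := hall i <;> have hi' := hall (i + 1) <;>
    by_cases hj : j = i <;> by_cases hj' : j = i + 1 <;> grind

theorem forall_letter_iff (h : ExchangesRows i v w) {p : ℕ → ℕ → Prop} (hp : p i = p (i + 1)) :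
    (∀ j, ∀ x ∈ v j, p j x) ↔ ∀ j, ∀ x ∈ w j, p j x :=
  h.forall_row_iff (P := fun j l => ∀ x ∈ l, p j x) (fun _ _ _ _ => Iff.rfl)
    (by simp only [hp, ← List.forall_mem_append, h.2.perm.mem_iff])

theorem mem_flaggedFactorizations_iff (h : ExchangesRows i v w) (hi : i + 1 < n)
    (hΦ : Φ i = Φ (i + 1)) :
    v ∈ flaggedFactorizations n α Φ ↔
      w ∈ flaggedFactorizations n (α ∘ Equiv.swap i (i + 1)) Φ := by
  have hnil : (∀ j, n ≤ j → v j = []) ↔ ∀ j, n ≤ j → w j = [] :=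
    h.forall_row_iff (P := fun j l => n ≤ j → l = []) (fun _ _ _ _ => Iff.rfl) (by grind)
  have hlen : (∀ j, (v j).length = α j) ↔
      ∀ j, (w j).length = (α ∘ Equiv.swap i (i + 1)) j :=
    h.forall_row_iff (P := fun j l => l.length = α j)
      (P' := fun j l => l.length = (α ∘ Equiv.swap i (i + 1)) j)
      (fun j hj hj' l => by simp [Equiv.swap_apply_of_ne_of_ne hj hj'])
      (by simp [h.2.length_row, h.2.length_bumped, and_comm])
  have hsorted : (∀ j, (v j).Pairwise (· ≤ ·)) ↔ ∀ j, (w j).Pairwise (· ≤ ·) :=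
    h.forall_row_iff (P := fun _ l => l.Pairwise (· ≤ ·)) (fun _ _ _ _ => Iff.rfl)
      ⟨fun hv => ⟨h.2.sorted_bumped hv.2, h.2.sorted_row hv.1⟩,
        fun hw => ⟨h.2.sorted_source hw.2, h.2.sorted_inserted hw.1⟩⟩
  have hshape : HasGreeneShape (dsort n α) (wordOfFactors n v) ↔
      HasGreeneShape (dsort n (α ∘ Equiv.swap i (i + 1))) (wordOfFactors n w) := by
    rw [dsort_comp_perm fun k => by grind]
    exact ⟨fun hv => hv.of_knuthEquiv (h.knuthEquiv hi),
      fun hw => hw.of_knuthEquiv (h.knuthEquiv hi).symm⟩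
  have hpos := h.forall_letter_iff (p := fun _ x => 1 ≤ x) rfl
  have hflag := h.forall_letter_iff (p := fun j x => x ≤ Φ j) (by simp only [hΦ])
  exact ⟨fun hv => ⟨⟨hnil.1 hv.1.1, hlen.1 hv.1.2, hsorted.1 hv.1.3, hpos.1 hv.1.4,
      hshape.1 hv.1.5⟩, hflag.1 hv.2⟩,
    fun hw => ⟨⟨hnil.2 hw.1.1, hlen.2 hw.1.2, hsorted.2 hw.1.3, hpos.2 hw.1.4,
      hshape.2 hw.1.5⟩, hflag.2 hw.2⟩⟩

end ExchangesRows

namespace IsKeyFactorization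

variable {n i : ℕ} {α : ℕ → ℕ} {v : ℕ → List ℕ}

theorem exists_exchangesRows (hv : IsKeyFactorization n α v) (hi : i + 1 < n)
    (hα : α i ≤ α (i + 1)) : ∃ w, ExchangesRows i v w := by
  obtain ⟨ys, r', hrows⟩ := RowExchange.exists_of_forall₂
    (p := (v (i + 1)).take (α (i + 1) - α i))
    (by simpa only [List.take_append_drop] using hv.sorted (i + 1))
    (hv.forall₂_drop (Nat.lt_add_one i) hi hα)
  obtain ⟨w, hoff, rfl, rfl⟩ := exists_row_update (i := i) v r' ys
  rw [List.take_append_drop] at hrows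
  exact ⟨w, hoff, hrows⟩

theorem exists_exchangesRows_reverse {w : ℕ → List ℕ} (hw : IsKeyFactorization n α w)
    (hi : i + 1 < n) (hα : α (i + 1) ≤ α i) : ∃ v, ExchangesRows i v w := by
  obtain ⟨r, xs, hrows⟩ := RowExchange.exists_of_forall₂_reverse
    (q := (w i).drop (α (i + 1)))
    (by simpa only [List.take_append_drop] using hw.sorted i)
    (hw.forall₂_take (Nat.lt_add_one i) hi hα)
  obtain ⟨v, hoff, rfl, rfl⟩ := exists_row_update (i := i) w xs r
  rw [List.take_append_drop] at hrows
  exact ⟨v, fun j hj hj' => (hoff j hj hj').symm, hrows⟩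

end IsKeyFactorization

section FlagMoves

variable {n i : ℕ} {α Φ : ℕ → ℕ}

theorem knuthBijective_swap_of_le (hi : i + 1 < n) (hΦ : Φ i = Φ (i + 1))
    (hα : α i ≤ α (i + 1)) :
    KnuthBijective n (flaggedFactorizations n α Φ)
      (flaggedFactorizations n (α ∘ Equiv.swap i (i + 1)) Φ) := by
  obtain ⟨ζ, hζ, hrows⟩ := exists_bijOn_of_biUnique (ExchangesRows.biUnique i)
    (X := flaggedFactorizations n α Φ)
    (Y := flaggedFactorizations n (α ∘ Equiv.swap i (i + 1)) Φ)
    (fun v hv => by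
      obtain ⟨w, hvw⟩ := hv.1.exists_exchangesRows hi hα
      exact ⟨w, (hvw.mem_flaggedFactorizations_iff hi hΦ).1 hv, hvw⟩)
    (fun w hw => by
      obtain ⟨v, hvw⟩ := hw.1.exists_exchangesRows_reverse hi (by simpa using hα)
      exact ⟨v, (hvw.mem_flaggedFactorizations_iff hi hΦ).2 hw, hvw⟩)
  exact ⟨ζ, hζ, fun v hv => (hrows v hv).knuthEquiv hi⟩

theorem flaggedFactorizations_congr {Φ' : ℕ → ℕ} (h : ∀ j, α j ≠ 0 → Φ j = Φ' j) :
    flaggedFactorizations n α Φ = flaggedFactorizations n α Φ' := by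
  ext v
  refine and_congr_right fun hv => forall₃_congr fun j x hx => ?_
  rw [h j (hv.length_eq j ▸ (List.length_pos_of_mem hx).ne')]

theorem flaggedFactorizations_update_pred (hi : i + 1 < n) (hΦ : Φ i = Φ (i + 1))
    (hα : α i ≤ α (i + 1)) :
    flaggedFactorizations n α (Function.update Φ i (Φ i - 1)) = flaggedFactorizations n α Φ := by
  ext v
  refine and_congr_right fun hv => ⟨fun hflag j x hx => ?_, fun hflag j x hx => ?_⟩
  · grind
  rcases eq_or_ne j i with rfl | hj
  · obtain ⟨q, hq, rfl⟩ := List.mem_iff_getElem.1 hx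
    have hlen := hv.length_eq
    have hp : α (j + 1) - α j + q < (v (j + 1)).length := by grind
    have hlt := hv.getElem_lt (Nat.lt_add_one j) hi hp hq (by grind)
    have hle := hflag _ _ (List.getElem_mem hp)
    rw [Function.update_self]
    omega
  · rw [Function.update_of_ne hj]
    exact hflag j x hx

end FlagMoves

/-! ### Compressing a flag -/

/-- `𝒲(α, Φ)` is in plactic bijection with `𝒲(αh, Φ₀)` for some rearrangement `αh` of `α`, where
`Φ₀ = (1, 2, …, n)`. -/
def IsCompressible (n : ℕ) (α Φ : ℕ → ℕ) : Prop :=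
  ∃ αh : ℕ → ℕ, (∀ i, n ≤ i → αh i = 0) ∧ dsort n αh = dsort n α ∧
    KnuthBijective n (flaggedFactorizations n α Φ) (flaggedFactorizations n αh (· + 1))

/-- A weakly increasing flag lying between the standard flag `(1, 2, …, n)` and `(n, n, …, n)`. -/
structure DominatesStandardFlag (n : ℕ) (Φ : ℕ → ℕ) : Prop where
  monotoneOn : MonotoneOn Φ (Set.Iio n)
  succ_le : ∀ i < n, i + 1 ≤ Φ i
  le : ∀ i < n, Φ i ≤ n

section Compression

variable {n i : ℕ} {α Φ : ℕ → ℕ}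

theorem swap_succ_lt_iff (hi : i + 1 < n) (k : ℕ) : Equiv.swap i (i + 1) k < n ↔ k < n := by
  grind

theorem comp_swap_eq_zero (hi : i + 1 < n) (hα : ∀ j, n ≤ j → α j = 0) (j : ℕ) (hj : n ≤ j) :
    (α ∘ Equiv.swap i (i + 1)) j = 0 := by
  grind

theorem sum_mul_comp_swap_lt (hi : i + 1 < n) (h0 : α i = 0) (h1 : α (i + 1) ≠ 0) :
    ∑ j ∈ Finset.range n, j * (α ∘ Equiv.swap i (i + 1)) j < ∑ j ∈ Finset.range n, j * α j := by
  calc _ = ∑ j ∈ Finset.range n, Equiv.swap i (i + 1) j * α j :=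
        Finset.sum_equiv (Equiv.swap i (i + 1)) (by simp [swap_succ_lt_iff hi]) (by simp)
    _ < _ := Finset.sum_lt_sum (fun j _ => ?_) ⟨i + 1, Finset.mem_range.2 hi, ?_⟩
  · rcases eq_or_ne j i with rfl | hj
    · simp [h0]
    · exact Nat.mul_le_mul_right _ (by grind)
  · simpa [Nat.succ_mul] using Nat.pos_of_ne_zero h1

theorem monotoneOn_update {c : ℕ} (hΦ : MonotoneOn Φ (Set.Iio n)) (hlower : ∀ j < i, Φ j ≤ c)
    (hupper : ∀ j, i < j → j < n → c ≤ Φ j) : MonotoneOn (Function.update Φ i c) (Set.Iio n) := by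
  intro j hj k hk hjk
  have := hΦ hj hk hjk
  grind

theorem IsCompressible.of_knuthBijective {α' Φ' : ℕ → ℕ}
    (h : KnuthBijective n (flaggedFactorizations n α Φ) (flaggedFactorizations n α' Φ'))
    (hsort : dsort n α' = dsort n α) (hc : IsCompressible n α' Φ') : IsCompressible n α Φ := by
  obtain ⟨αh, hzero, hsort', hbij⟩ := hc
  exact ⟨αh, hzero, hsort'.trans hsort, h.trans hbij⟩

theorem knuthBijective_swap (hi : i + 1 < n) (hΦ : Φ i = Φ (i + 1)) :
    KnuthBijective n (flaggedFactorizations n α Φ)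
      (flaggedFactorizations n (α ∘ Equiv.swap i (i + 1)) Φ) := by
  rcases le_total (α i) (α (i + 1)) with hα | hα
  · exact knuthBijective_swap_of_le hi hΦ hα
  · have := knuthBijective_swap_of_le (α := α ∘ Equiv.swap i (i + 1)) hi hΦ (by simpa using hα)
    rw [Function.comp_assoc, ← Equiv.coe_trans, Equiv.swap_swap] at this
    exact this.symm

theorem exists_knuthBijective_le (hα : ∀ j, n ≤ j → α j = 0) (hi : i + 1 < n)
    (hΦ : Φ i = Φ (i + 1)) : ∃ α' : ℕ → ℕ, α' i ≤ α' (i + 1) ∧ (∀ j, n ≤ j → α' j = 0) ∧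
      dsort n α' = dsort n α ∧
      KnuthBijective n (flaggedFactorizations n α Φ) (flaggedFactorizations n α' Φ) := by
  rcases le_total (α i) (α (i + 1)) with hle | hle
  · exact ⟨α, hle, hα, rfl, KnuthBijective.refl _ _⟩
  · exact ⟨α ∘ Equiv.swap i (i + 1), by simpa using hle, comp_swap_eq_zero hi hα,
      dsort_comp_perm (swap_succ_lt_iff hi), knuthBijective_swap hi hΦ⟩

namespace DominatesStandardFlag

theorem eq_succ_or_exists_plateau (hΦ : DominatesStandardFlag n Φ) :
    (∀ i < n, Φ i = i + 1) ∨ ∃ i, i + 1 < n ∧ Φ i = Φ (i + 1) ∧ ∀ j < i, Φ j < Φ i := by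
  by_cases hex : ∃ i, i + 1 < n ∧ Φ i = Φ (i + 1)
  · obtain ⟨hi, hflat⟩ := Nat.find_spec hex
    refine Or.inr ⟨Nat.find hex, hi, hflat, fun j hj => ?_⟩
    have hne : Φ j ≠ Φ (j + 1) := fun h => Nat.find_min hex hj ⟨by omega, h⟩
    have hle := hΦ.monotoneOn (a := j) (b := j + 1) (by grind) (by grind) (by omega)
    exact (hle.lt_of_ne hne).trans_le (hΦ.monotoneOn (by grind) (by grind) (by omega))
  · refine Or.inl fun i hi => (hΦ.succ_le i hi).antisymm' ?_
    push Not at hex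
    induction hi' : n - i generalizing i with
    | zero => omega
    | succ d ih =>
      rcases (Nat.succ_le_of_lt hi).eq_or_lt with hlast | hlt
      · exact (hΦ.le i hi).trans hlast.ge
      · have hle := hΦ.monotoneOn (a := i) (b := i + 1) hi hlt (by omega)
        have hne := hex i hlt
        have := ih (i + 1) hlt (by omega)
        omega

theorem update_pred (hΦ : DominatesStandardFlag n Φ) (hi : i + 1 < n) (hflat : Φ i = Φ (i + 1))
    (hfirst : ∀ j < i, Φ j < Φ i) :
    DominatesStandardFlag n (Function.update Φ i (Φ i - 1)) where
  monotoneOn := monotoneOn_update hΦ.monotoneOn (fun j hj => Nat.le_pred_of_lt (hfirst j hj))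
    fun j hj hjn => (Nat.sub_le _ _).trans (hΦ.monotoneOn (by grind) hjn hj.le)
  succ_le j hj := by
    have := hΦ.succ_le j hj
    have := hΦ.succ_le (i + 1) hi
    grind
  le j hj := by
    have := hΦ.le j hj
    grind

theorem isCompressible (hΦ : DominatesStandardFlag n Φ) (hα : ∀ j, n ≤ j → α j = 0) :
    IsCompressible n α Φ := by
  induction hN : ∑ j ∈ Finset.range n, Φ j using Nat.strong_induction_on generalizing α Φ with
  | _ N ih =>
    rcases hΦ.eq_succ_or_exists_plateau with hstandard | ⟨i, hi, hflat, hfirst⟩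
    · refine ⟨α, hα, rfl, ?_⟩
      rw [flaggedFactorizations_congr (Φ' := (· + 1)) fun j hj => hstandard j ?_]
      · exact KnuthBijective.refl _ _
      · by_contra! hle
        exact hj (hα j hle)
    · obtain ⟨α', hle, hα', hsort, hbij⟩ := exists_knuthBijective_le hα hi hflat
      rw [← flaggedFactorizations_update_pred hi hflat hle] at hbij
      refine .of_knuthBijective hbij hsort
        (ih _ ?_ (hΦ.update_pred hi hflat hfirst) hα' rfl)
      rw [← hN]
      have hpos := hΦ.succ_le i (by omega)
      refine Finset.sum_lt_sum (fun j _ => by grind) ⟨i, Finset.mem_range.2 (by omega), ?_⟩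
      rw [Function.update_self]
      omega

end DominatesStandardFlag

theorem succ_le_of_mem_flaggedFactorizations {v : ℕ → List ℕ}
    (hv : v ∈ flaggedFactorizations n α Φ) (hΦ : MonotoneOn Φ (Set.Iio n)) (hi : i < n)
    (hα : ∀ j ≤ i, α j ≠ 0) : i + 1 ≤ Φ i := by
  have hcard := hv.1.card_nonzero_rows_le hi fun j hj x hx =>
    (hv.2 j x hx).trans (hΦ (hj.trans_lt hi) hi hj)
  rwa [Finset.filter_true_of_mem fun j hj => hα j (by grind), Finset.card_range] at hcard

theorem dominatesStandardFlag_of_zeros_last (hΦ : MonotoneOn Φ (Set.Iio n)) (hn : ∀ i < n, Φ i ≤ n)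
    (hne : (flaggedFactorizations n α Φ).Nonempty)
    (hzero : ∀ i, i + 1 < n → α i = 0 → α (i + 1) = 0) :
    DominatesStandardFlag n fun j => if α j = 0 then n else Φ j := by
  have hzeros {j k : ℕ} (hjk : j ≤ k) (hk : k < n) (hj : α j = 0) : α k = 0 := by
    induction k, hjk using Nat.le_induction with
    | base => exact hj
    | succ k _ ih => exact hzero k hk (ih (by omega))
  obtain ⟨v, hv⟩ := hne
  refine ⟨fun j hj k hk hjk => ?_, fun j hj => ?_, fun j hj => ?_⟩
  · have := hΦ hj hk hjk
    have := hzeros hjk hk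
    grind
  · have := succ_le_of_mem_flaggedFactorizations hv hΦ hj
    grind
  · have := hn j hj
    grind

theorem isCompressible_of_nonempty (hΦ : MonotoneOn Φ (Set.Iio n)) (hn : ∀ i < n, Φ i ≤ n)
    (hα : ∀ j, n ≤ j → α j = 0) (hne : (flaggedFactorizations n α Φ).Nonempty) :
    IsCompressible n α Φ := by
  induction hN : ∑ j ∈ Finset.range n, j * α j using Nat.strong_induction_on
    generalizing α Φ with
  | _ N ih =>
    by_cases hex : ∃ i, i + 1 < n ∧ α i = 0 ∧ α (i + 1) ≠ 0
    · obtain ⟨i, hi, h0, h1⟩ := hex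
      have hbij : KnuthBijective n (flaggedFactorizations n α Φ) (flaggedFactorizations n
          (α ∘ Equiv.swap i (i + 1)) (Function.update Φ i (Φ (i + 1)))) := by
        rw [flaggedFactorizations_congr (Φ' := Function.update Φ i (Φ (i + 1))) (by grind)]
        exact knuthBijective_swap hi (by grind)
      refine .of_knuthBijective hbij (dsort_comp_perm (swap_succ_lt_iff hi)) (ih _ ?_ ?_ ?_
        (comp_swap_eq_zero hi hα) (hbij.nonempty hne) rfl)
      · exact hN ▸ sum_mul_comp_swap_lt hi h0 h1
      · exact monotoneOn_update hΦ (fun j hj => hΦ (by grind) hi (by omega))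
          fun j hj hjn => hΦ hi hjn hj
      · have := hn (i + 1) hi
        grind
    · have hdom := dominatesStandardFlag_of_zeros_last hΦ hn hne (by grind)
      refine .of_knuthBijective ?_ rfl (hdom.isCompressible hα)
      rw [flaggedFactorizations_congr (Φ' := fun j => if α j = 0 then n else Φ j) (by grind)]
      exact KnuthBijective.refl _ _

end Compression

theorem IsFlag.monotoneOn {n : ℕ} {Φ : ℕ → ℕ} (hΦ : IsFlag n Φ) : MonotoneOn Φ (Set.Iio n) :=
  fun i _ j hj hij => hΦ.1 i j hij hj

theorem IsFlag.le {n : ℕ} {Φ : ℕ → ℕ} (hΦ : IsFlag n Φ) (i : ℕ) (hi : i < n) : Φ i ≤ n :=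
  (hΦ.1 i (n - 1) (by omega) (by omega)).trans hΦ.2.2.le

theorem reiner_shimozono_flag_compression_general (n : ℕ) (B : BurgeData)
    (β : ℕ → ℕ) (hβ : ∀ i, n ≤ i → β i = 0)
    (Φ : ℕ → ℕ) (hmono : MonotoneOn Φ (Set.Iio n)) (hle : ∀ i < n, Φ i ≤ n) :
    WSet n B β Φ = ∅ ∨
    ∃ βh : ℕ → ℕ, (∀ i, n ≤ i → βh i = 0) ∧
      (∀ i, dsort n βh i = dsort n β i) ∧
      ∃ ζ : (ℕ → List ℕ) → (ℕ → List ℕ),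
        Set.BijOn ζ (WSet n B β Φ) (WSet n B βh (fun i => i + 1)) ∧
        ∀ v ∈ WSet n B β Φ, KnuthEquiv (wordOfFactors n v) (wordOfFactors n (ζ v)) := by
  simp only [WSet_eq_flaggedFactorizations]
  refine (flaggedFactorizations n β Φ).eq_empty_or_nonempty.imp_right fun hne => ?_
  obtain ⟨βh, hzero, hsort, hbij⟩ := isCompressible_of_nonempty hmono hle hβ hne
  exact ⟨βh, hzero, congrFun hsort, hbij⟩

end FlagCompression

/-- (Reiner–Shimozono flag compression.) For every `β ∈ ℤ₊ⁿ` and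
every flag `Φ`, either `𝒲(β, Φ)` is empty, or there exist `β̂` with the same
decreasing rearrangement as `β` and a bijection `ζ : 𝒲(β, Φ) → 𝒲(β̂, Φ₀)` onto the
`𝒲`-set for the standard flag `Φ₀ = (1, 2, …, n)` such that every `u ∈ 𝒲(β, Φ)` is
Knuth equivalent to `ζ(u)`. -/
theorem reiner_shimozono_flag_compression
    (n : ℕ) (B : BurgeData)
    (β : ℕ → ℕ) (hβ : ∀ i, n ≤ i → β i = 0)
    (Φ : ℕ → ℕ) (hΦ : IsFlag n Φ) :
    WSet n B β Φ = ∅ ∨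
    ∃ βh : ℕ → ℕ, (∀ i, n ≤ i → βh i = 0) ∧
      (∀ i, dsort n βh i = dsort n β i) ∧
      ∃ ζ : (ℕ → List ℕ) → (ℕ → List ℕ),
        Set.BijOn ζ (WSet n B β Φ) (WSet n B βh (fun i => i + 1)) ∧
        ∀ v ∈ WSet n B β Φ, KnuthEquiv (wordOfFactors n v) (wordOfFactors n (ζ v)) :=
  reiner_shimozono_flag_compression_general n B β hβ Φ hΦ.monotoneOn hΦ.le

end SkewG
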